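/- arXiv:2211.15602 — 2 statements merged into one kernel-verified Lean document; each statement's English description precedes it below -/
import Mathlib

section
/- For all integers n ≥ 1 and k ≥ 2, every digraph G with n vertices and every vertex of outdegree exactly k satisfies N_1(G) ≤ 5·n²·k·α(k)^(n−1), where N_1(G) is the number of path-cycle subgraphs of the digraph obtained from G by replacing each multi-edge of multiplicity k by a single edge of multiplicity 1, and α(k) = (k − 1 + √((k−1)² + 4))/2. -/
open scoped Classical
open Finset

/-- Number of directed cycles in a finite directed multigraph on `Fin n`
specified by the edge-multiplicity function `G`: self-loops are cycles of
length 1, cycles of length `≥ 2` correspond to cyclic permutations, parallel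
edges give distinct cycles, and cycles are counted up to cyclic rotation. -/
noncomputable def cycleCount (n : ℕ) (G : Fin n → Fin n → ℕ) : ℕ :=
  (∑ v, G v v) +
  ∑ σ : Equiv.Perm (Fin n), if σ.IsCycle then ∏ v ∈ σ.support, G v (σ v) else 0

/-- Number of path-cycle subgraphs of a finite directed multigraph with
multiplicity function `G`: a path-cycle subgraph is given by a nonempty
vertex set `s` together with a successor map `f` on `s` (extended by the
identity off `s`) whose functional digraph on `s` is weakly connected and
has at most one source (vertex of indegree zero); parallel edges give
distinct path-cycles. -/
noncomputable def pathCycleCount {V : Type*} [Fintype V] [DecidableEq V]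
    (G : V → V → ℕ) : ℕ :=
  ∑ s : Finset V, ∑ f : V → V,
    if s.Nonempty ∧ (∀ v, v ∉ s → f v = v) ∧ (∀ v ∈ s, f v ∈ s) ∧
        (∀ u ∈ s, ∀ v ∈ s,
          Relation.ReflTransGen (fun a b => (a ∈ s ∧ f a = b) ∨ (b ∈ s ∧ f b = a)) u v) ∧
        (s.filter fun v => ∀ u ∈ s, f u ≠ v).card ≤ 1
    then ∏ v ∈ s, G v (f v) else 0

/-- `α(k) = (k - 1 + √((k-1)² + 4)) / 2`. -/
noncomputable def alphaK (k : ℕ) : ℝ :=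
  ((k : ℝ) - 1 + Real.sqrt (((k : ℝ) - 1) ^ 2 + 4)) / 2

/-- Multiplicity function of the digraph `G_{n,k}`: on vertices `Fin n`,
edges `(i, i+1 mod n)` have multiplicity `k - 1` and edges `(i, i+2 mod n)`
have multiplicity `1`. -/
def GnkMult (n k : ℕ) : Fin n → Fin n → ℕ := fun i j =>
  if (j.val + n - i.val) % n = 1 then k - 1
  else if (j.val + n - i.val) % n = 2 then 1
  else 0

/-- Multiplicity function of the digraph `G'_{n,k}`: on vertices `Fin n`,
edges `(i, i+1 mod n)` have multiplicity `1` and edges `(i, i+2 mod n)`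
have multiplicity `k - 1`. -/
def Gnk'Mult (n k : ℕ) : Fin n → Fin n → ℕ := fun i j =>
  if (j.val + n - i.val) % n = 1 then 1
  else if (j.val + n - i.val) % n = 2 then k - 1
  else 0

/-- Edge relation of the simple digraph `G_m`: `(i, j)` is an edge whenever
`j - i ≡ 1 (mod m)` or `j - i ≡ 2 (mod m)`. -/
def GmRel (m : ℕ) : Fin m → Fin m → Prop := fun i j =>
  (j.val + m - i.val) % m = 1 ∨ (j.val + m - i.val) % m = 2

/-- The sequence `S_m` with `S_0 = 1`, `S_1 = k - 1`,
`S_m = (k-1) S_{m-1} + S_{m-2}`. -/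
def Sseq (k : ℕ) : ℕ → ℕ
  | 0 => 1
  | 1 => k - 1
  | (m + 2) => (k - 1) * Sseq k (m + 1) + Sseq k m

/-- `F_k(n)`: the maximum number of directed cycles over all digraphs on `n`
vertices with every outdegree exactly `k` in which every multi-edge between
distinct vertices has multiplicity at most `k - 1`. -/
noncomputable def Fk (k n : ℕ) : ℕ :=
  sSup {c : ℕ | ∃ G : Fin n → Fin n → ℕ,
    (∀ v, (∑ u, G v u) = k) ∧ (∀ u v : Fin n, u ≠ v → G u v ≤ k - 1) ∧
    c = cycleCount n G}

/-- Weak connectivity (same connected component) in a directed multigraph. -/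
def MConn {n : ℕ} (G : Fin n → Fin n → ℕ) : Fin n → Fin n → Prop :=
  Relation.ReflTransGen (fun a b => 0 < G a b ∨ 0 < G b a)

/-- A deterministic Markov decision problem with state space `S`, action
space `A` (all actions available at every state), deterministic transition
function `T`, reward function `R` and discount factor `gamma ∈ [0, 1)`. -/
structure DMDP (S A : Type*) where
  T : S → A → S
  R : S → A → ℝ
  gamma : ℝ
  gamma_nonneg : 0 ≤ gamma
  gamma_lt_one : gamma < 1

namespace DMDP

variable {S A : Type*}

/-- The trajectory of states obtained by following policy `π` from `s`. -/
def traj (M : DMDP S A) (π : S → A) (s : S) (t : ℕ) : S :=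
  (fun x => M.T x (π x))^[t] s

/-- The value function `V^π(s) = Σ_t γ^t R(s_t, π(s_t))`. -/
noncomputable def V (M : DMDP S A) (π : S → A) (s : S) : ℝ :=
  ∑' t : ℕ, M.gamma ^ t * M.R (M.traj π s t) (π (M.traj π s t))

/-- The action value function `Q^π(s, a) = R(s, a) + γ V^π(T(s, a))`. -/
noncomputable def Q (M : DMDP S A) (π : S → A) (s : S) (a : A) : ℝ :=
  M.R s a + M.gamma * M.V π (M.T s a)

/-- `π ≺ π'`: pointwise `V^π ≤ V^{π'}` with strict inequality somewhere. -/
def PLt (M : DMDP S A) (π π' : S → A) : Prop :=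
  (∀ s, M.V π s ≤ M.V π' s) ∧ ∃ s, M.V π s < M.V π' s

/-- `π'` is obtained from `π` by policy improvement with arbitrary action
selection. -/
def ImpStep (M : DMDP S A) (π π' : S → A) : Prop :=
  π' ≠ π ∧ ∀ s, π' s ≠ π s → M.V π s < M.Q π s (π' s)

/-- `π'` is obtained from `π` by policy improvement with max-gain action
selection. -/
def MaxGainStep (M : DMDP S A) (π π' : S → A) : Prop :=
  π' ≠ π ∧ ∀ s, π' s ≠ π s →
    M.V π s < M.Q π s (π' s) ∧
    ∀ a, M.V π s < M.Q π s a → M.Q π s a ≤ M.Q π s (π' s)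

/-- The first time step at which a previously visited state recurs on the
trajectory of `π` from `s`. -/
noncomputable def pcLen (M : DMDP S A) (π : S → A) (s : S) : ℕ :=
  sInf {t : ℕ | ∃ t' < t, M.traj π s t' = M.traj π s t}

/-- The path-cycle `P^π_s`: the sequence of state–action–state triples
`(s_t, π(s_t), s_{t+1})` for `t` up to (but excluding) the first recurrence
of a previously visited state. -/
noncomputable def pathCycle (M : DMDP S A) (π : S → A) (s : S) : List (S × A × S) :=
  (List.range (M.pcLen π s)).map fun t =>
    (M.traj π s t, π (M.traj π s t), M.traj π s (t + 1))

/-- The multiplicity function of the DMDP digraph `G_M`: one edge from `s`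
to `T(s, a)` for every action `a`. -/
noncomputable def digraph (M : DMDP S A) [Fintype A] : S → S → ℕ :=
  fun s s' => (Finset.univ.filter fun a => M.T s a = s').card

/-- A state is non-branching if all actions lead to the same next state. -/
def NonBranching (M : DMDP S A) (s : S) : Prop := ∃ s', ∀ a, M.T s a = s'

/-- The relation `∼` on path-cycles: same sequence of states, and wherever
the actions differ the state is non-branching. -/
def PCSim (M : DMDP S A) (P₁ P₂ : List (S × A × S)) : Prop :=
  P₁.length = P₂.length ∧
  ∀ (t : ℕ) (h₁ : t < P₁.length) (h₂ : t < P₂.length),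
    (P₁.get ⟨t, h₁⟩).1 = (P₂.get ⟨t, h₂⟩).1 ∧
    (P₁.get ⟨t, h₁⟩).2.2 = (P₂.get ⟨t, h₂⟩).2.2 ∧
    ((P₁.get ⟨t, h₁⟩).2.1 ≠ (P₂.get ⟨t, h₂⟩).2.1 → M.NonBranching (P₁.get ⟨t, h₁⟩).1)

/-- The relation `≈` on path-cycles: they differ only in equivalent edges,
i.e. have the same sequences of source and target states. -/
def PCApprox (_M : DMDP S A) (P₁ P₂ : List (S × A × S)) : Prop :=
  P₁.length = P₂.length ∧
  ∀ (t : ℕ) (h₁ : t < P₁.length) (h₂ : t < P₂.length),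
    (P₁.get ⟨t, h₁⟩).1 = (P₂.get ⟨t, h₂⟩).1 ∧
    (P₁.get ⟨t, h₁⟩).2.2 = (P₂.get ⟨t, h₂⟩).2.2

end DMDP

/-!
A path-cycle is a simple path together with an edge leaving its last vertex, so with outdegrees at
most `k` their number is at most `k` times the sum, over all pairs `(x, t)`, of the number of simple
paths from `x` to `t`. It remains to bound each of these numbers by `α ^ (n - 1)`.

The number of paths is affine in the row of edge multiplicities of each vertex. Once all
multiplicities are at most `c = k - 1`, the worst case is therefore that every vertex has a heavy
edge of weight `c` and a light edge of weight `1`. The bound is proved by induction on the number of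
available vertices, using `α ^ 2 = c * α + 1`:
* a vertex that can be left only through one edge, of weight at most `q`, is contracted into the end
  of that edge, which costs a factor `(c * q + 1) / α`, at most `α`; edges that become parallel are
  rescaled into a single edge of weight at most `α`, so such weights are allowed as well;
* if every vertex is branching and `2 ≤ c`, then either the light target of `x` is the heavy target
  of another vertex, which makes the paths from there few, or the heavy edges avoid that target and
  two of them end in the same vertex by pigeonhole; no path uses both;
* if `c = 1`, light and heavy edges may be exchanged; a target of `x` that no other vertex reaches
  can be removed, and any other one has few paths starting from it, because the vertex reaching it
  becomes nonbranching.
-/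

section MetallicMean

variable {c : ℝ}

/-- The positive root of `X ^ 2 = c * X + 1`. -/
noncomputable def metallicMean (c : ℝ) : ℝ := (c + √(c ^ 2 + 4)) / 2

theorem metallicMean_sq (c : ℝ) : metallicMean c ^ 2 = c * metallicMean c + 1 := by
  have := Real.sq_sqrt (show 0 ≤ c ^ 2 + 4 by positivity)
  rw [metallicMean]
  linarith

theorem metallicMean_cube (c : ℝ) : metallicMean c ^ 3 = (c ^ 2 + 1) * metallicMean c + c := by
  linear_combination (metallicMean c + c) * metallicMean_sq c

theorem self_le_metallicMean (c : ℝ) : c ≤ metallicMean c := by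
  have : c ≤ √(c ^ 2 + 4) := Real.le_sqrt_of_sq_le (by linarith)
  rw [metallicMean]
  linarith

theorem one_le_metallicMean (hc : 0 ≤ c) : 1 ≤ metallicMean c := by
  have := self_le_metallicMean c
  nlinarith [metallicMean_sq c]

theorem metallicMean_pos (hc : 0 ≤ c) : 0 < metallicMean c :=
  zero_lt_one.trans_le (one_le_metallicMean hc)

theorem metallicMean_le_add_one (hc : 0 ≤ c) : metallicMean c ≤ c + 1 := by
  nlinarith [metallicMean_sq c, one_le_metallicMean hc]

theorem mul_metallicMean_le_mul_add_one {q : ℝ} (hq : q ≤ metallicMean c) :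
    q * metallicMean c ≤ c * q + 1 := by
  nlinarith [metallicMean_sq c, self_le_metallicMean c]

theorem mul_sq_add_one_add_le_metallicMean_cube (hc : 1 ≤ c) :
    c * (c ^ 2 + 1) + (c + 1) ≤ metallicMean c ^ 3 := by
  have hα : metallicMean c * (metallicMean c - c) = 1 := by linear_combination metallicMean_sq c
  have hαc : metallicMean c ≤ c ^ 2 + 1 := by
    nlinarith [metallicMean_le_add_one (zero_le_one.trans hc)]
  rw [metallicMean_cube]
  nlinarith [mul_le_mul_of_nonneg_right hαc (sub_nonneg.2 (self_le_metallicMean c))]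

theorem add_one_mul_metallicMean_add_le_cube (hc : 2 ≤ c) :
    (c + 1) * (metallicMean c + c) ≤ metallicMean c ^ 3 := by
  have hα : c ≤ (c - 1) * metallicMean c := by nlinarith [self_le_metallicMean c]
  rw [metallicMean_cube]
  nlinarith

end MetallicMean

section PathSum

variable {V : Type*} [DecidableEq V]

/-- The total weight of the simple directed paths from `x` to `t` all of whose vertices other
than `x` lie in `U`, where the weight of a path is the product of the weights of its edges. -/
noncomputable def pathSum (w : V → V → ℝ) (t : V) (U : Finset V) (x : V) : ℝ :=
  if x = t then 1 else ∑ v ∈ U.attach, w x v * pathSum w t (U.erase v) v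
termination_by #U
decreasing_by exact card_erase_lt_of_mem v.2

variable {w w' : V → V → ℝ} {t x y g : V} {U : Finset V}

@[simp]
theorem pathSum_self (w : V → V → ℝ) (t : V) (U : Finset V) : pathSum w t U t = 1 := by
  rw [pathSum, if_pos rfl]

theorem pathSum_of_ne (h : x ≠ t) :
    pathSum w t U x = ∑ v ∈ U, w x v * pathSum w t (U.erase v) v := by
  rw [pathSum, if_neg h]
  exact sum_attach U fun v => w x v * pathSum w t (U.erase v) v

theorem pathSum_empty_le_one (w : V → V → ℝ) (t x : V) : pathSum w t ∅ x ≤ 1 := by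
  obtain rfl | hx := eq_or_ne x t
  · simp
  · simp [pathSum_of_ne hx]

theorem pathSum_nonneg (hw : 0 ≤ w) (t : V) (U : Finset V) (x : V) : 0 ≤ pathSum w t U x := by
  induction U using Finset.strongInduction generalizing x with
  | H U ih =>
    obtain rfl | hx := eq_or_ne x t
    · simp
    · rw [pathSum_of_ne hx]
      exact sum_nonneg fun v hv => mul_nonneg (hw x v) (ih _ (erase_ssubset hv) v)

theorem pathSum_congr (h : ∀ a ∈ insert x U, ∀ b ∈ U, w a b = w' a b) :
    pathSum w t U x = pathSum w' t U x := by
  induction U using Finset.strongInduction generalizing x with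
  | H U ih =>
    obtain rfl | hx := eq_or_ne x t
    · simp
    rw [pathSum_of_ne hx, pathSum_of_ne hx]
    refine sum_congr rfl fun v hv => ?_
    rw [h x (mem_insert_self x U) v hv, ih _ (erase_ssubset hv) fun a ha b hb =>
      h a (mem_insert_of_mem (insert_erase hv ▸ ha)) b (mem_of_mem_erase hb)]

theorem pathSum_mono (hw : 0 ≤ w) (h : ∀ a ∈ insert x U, ∀ b ∈ U, w a b ≤ w' a b) :
    pathSum w t U x ≤ pathSum w' t U x := by
  induction U using Finset.strongInduction generalizing x with
  | H U ih =>
    obtain rfl | hx := eq_or_ne x t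
    · simp
    rw [pathSum_of_ne hx, pathSum_of_ne hx]
    refine sum_le_sum fun v hv => ?_
    have hxv : w x v ≤ w' x v := h x (mem_insert_self x U) v hv
    refine mul_le_mul hxv (ih _ (erase_ssubset hv) fun a ha b hb => ?_)
      (pathSum_nonneg hw _ _ _) ((hw x v).trans hxv)
    exact h a (mem_insert_of_mem (insert_erase hv ▸ ha)) b (mem_of_mem_erase hb)

theorem pathSum_le_pathSum_erase_of_row_eq_zero (hw : 0 ≤ w) (hxU : x ∉ U) (hy : y ∈ U)
    (hyt : y ≠ t) (h : ∀ b ∈ U, b ≠ y → w y b = 0) :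
    pathSum w t U x ≤ pathSum w t (U.erase y) x := by
  induction U using Finset.strongInduction generalizing x with
  | H U ih =>
    obtain rfl | hx := eq_or_ne x t
    · simp
    have hy0 : pathSum w t (U.erase y) y = 0 := by
      rw [pathSum_of_ne hyt]
      exact sum_eq_zero fun b hb => by
        rw [h b (mem_of_mem_erase hb) (ne_of_mem_erase hb), zero_mul]
    rw [pathSum_of_ne hx, pathSum_of_ne hx, ← add_sum_erase U _ hy, hy0, mul_zero, zero_add]
    refine sum_le_sum fun v hv => mul_le_mul_of_nonneg_left ?_ (hw x v)
    obtain ⟨hvy, hvU⟩ := mem_erase.1 hv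
    rw [erase_right_comm]
    exact ih _ (erase_ssubset hvU) (notMem_erase v U) (mem_erase.2 ⟨hvy.symm, hy⟩)
      fun b hb => h b (mem_of_mem_erase hb)

theorem pathSum_le_pathSum_erase_of_col_eq_zero (hw : 0 ≤ w) (hxU : x ∉ U) (hy : y ∈ U)
    (h : ∀ a ∈ insert x U, a ≠ y → a ≠ t → w a y = 0) :
    pathSum w t U x ≤ pathSum w t (U.erase y) x := by
  induction U using Finset.strongInduction generalizing x with
  | H U ih =>
    obtain rfl | hx := eq_or_ne x t
    · simp
    have hxy : w x y = 0 := h x (mem_insert_self x U) (ne_of_mem_of_not_mem hy hxU).symm hx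
    rw [pathSum_of_ne hx, pathSum_of_ne hx, ← add_sum_erase U _ hy, hxy, zero_mul, zero_add]
    refine sum_le_sum fun v hv => mul_le_mul_of_nonneg_left ?_ (hw x v)
    obtain ⟨hvy, hvU⟩ := mem_erase.1 hv
    rw [erase_right_comm]
    exact ih _ (erase_ssubset hvU) (notMem_erase v U) (mem_erase.2 ⟨hvy.symm, hy⟩)
      fun a ha => h a (mem_insert_of_mem (insert_erase hvU ▸ ha))

theorem pathSum_le_mul_of_row_support {M q : ℝ} (hw : 0 ≤ w) (hxt : x ≠ t)
    (hrow : ∀ b ∈ U, b ≠ g → w x b = 0) (hq : w x g ≤ q) (hM : 0 ≤ M)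
    (h : ∀ v ∈ U, pathSum w t (U.erase v) v ≤ M) : pathSum w t U x ≤ q * M := by
  have hq0 : 0 ≤ q := (hw x g).trans hq
  rw [pathSum_of_ne hxt]
  by_cases hg : g ∈ U
  · rw [sum_eq_single_of_mem g hg fun b hb hbg => by rw [hrow b hb hbg, zero_mul]]
    exact mul_le_mul hq (h g hg) (pathSum_nonneg hw _ _ _) hq0
  · rw [sum_eq_zero fun b hb => by rw [hrow b hb (ne_of_mem_of_not_mem hb hg), zero_mul]]
    positivity

section ContractRow

variable {q D : ℝ} {r r' : V → ℝ}

/-- The row of weights obtained from `r` by contracting a vertex `y` into a vertex `g`, where `y`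
is left through an edge to `g` of weight `q`: an edge into `y` becomes an edge into `g`. Edges into
`g` are also divided by `D`; a simple path uses at most one of them, so this costs at most a factor
`D` overall. -/
noncomputable def contractRow (q D : ℝ) (y g : V) (r : V → ℝ) : V → ℝ := fun v =>
  if v = y then 0 else if v = g then (r g + q * r y) / D else r v

theorem contractRow_of_ne {v : V} (hvy : v ≠ y) (hvg : v ≠ g) :
    contractRow q D y g r v = r v := by
  rw [contractRow, if_neg hvy, if_neg hvg]

theorem mul_contractRow_target (hyg : y ≠ g) (hD : D ≠ 0) :
    D * contractRow q D y g r g = r g + q * r y := by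
  rw [contractRow, if_neg hyg.symm, if_pos rfl, mul_div_cancel₀ _ hD]

theorem contractRow_mono (hq : 0 ≤ q) (hD : 0 ≤ D) (h : r ≤ r') :
    contractRow q D y g r ≤ contractRow q D y g r' := by
  intro v
  unfold contractRow
  split_ifs
  · exact le_rfl
  · gcongr <;> exact h _
  · exact h v

theorem contractRow_nonneg (hq : 0 ≤ q) (hD : 0 ≤ D) (h : 0 ≤ r) : 0 ≤ contractRow q D y g r :=
  le_of_eq_of_le (by ext; simp [contractRow]) (contractRow_mono hq hD h)

theorem contractRow_add (r r' : V → ℝ) :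
    contractRow q D y g (r + r') = contractRow q D y g r + contractRow q D y g r' := by
  ext v
  simp only [contractRow, Pi.add_apply]
  split_ifs <;> ring

theorem contractRow_single_le {a : ℝ} (ha : 0 ≤ a) (hD : 1 ≤ D) (hqD : q ≤ D) (hyg : y ≠ g)
    (f : V) : contractRow q D y g (Pi.single f a) ≤ Pi.single (if f = y then g else f) a := by
  have hD0 : 0 < D := zero_lt_one.trans_le hD
  intro v
  by_cases hfy : f = y
  · subst hfy
    by_cases hvg : v = g
    · subst hvg
      simpa [contractRow, hyg.symm, div_le_iff₀ hD0, mul_comm q] using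
        mul_le_mul_of_nonneg_left hqD ha
    · by_cases hvf : v = f <;> simp [contractRow, hvf, hvg, hyg]
  · rw [if_neg hfy]
    by_cases hvy : v = y
    · simp [contractRow, hvy, Ne.symm hfy]
    · by_cases hvg : v = g
      · subst hvg
        by_cases hvf : v = f
        · subst hvf
          simpa [contractRow, hvy, Ne.symm hvy] using div_le_self ha hD
        · simp [contractRow, hvy, hvf, Ne.symm hfy]
      · rw [contractRow_of_ne hvy hvg]

theorem contractRow_single_add_single (a b : ℝ) (hyg : y ≠ g) :
    contractRow q D y g (Pi.single y a + Pi.single g b) = Pi.single g ((b + q * a) / D) := by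
  ext v
  by_cases hvy : v = y
  · simp [contractRow, hvy, hyg]
  · by_cases hvg : v = g
    · subst hvg; simp [contractRow, hyg, hyg.symm]
    · simp [contractRow, hvy, hvg]

theorem pathSum_le_pathSum_contractRow_erase_of_notMem (hw : 0 ≤ w) (hxU : x ∉ U) (hy : y ∈ U)
    (hyt : y ≠ t) (hgU : g ∉ U) (hrow : ∀ b ∈ U, b ≠ y → w y b = 0) :
    pathSum w t U x ≤ pathSum (fun a => contractRow q D y g (w a)) t (U.erase y) x := by
  refine (pathSum_le_pathSum_erase_of_row_eq_zero hw hxU hy hyt hrow).trans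
    (pathSum_mono hw fun a _ b hb => ?_)
  obtain ⟨hby, hbU⟩ := mem_erase.1 hb
  rw [contractRow_of_ne hby (ne_of_mem_of_not_mem hbU hgU)]

theorem pathSum_le_mul_pathSum_contractRow_of_row_support (hw : 0 ≤ w) (hyt : y ≠ t)
    (hyU : y ∉ U) (hgU : g ∈ U) (hrow : ∀ b ∈ U, b ≠ g → w y b = 0) (hq : w y g ≤ q) :
    pathSum w t U y ≤
      q * pathSum (fun a => contractRow q D y g (w a)) t (U.erase g) g := by
  rw [pathSum_of_ne hyt, sum_eq_single_of_mem g hgU fun b hb hbg => by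
    rw [hrow b hb hbg, zero_mul]]
  refine mul_le_mul hq (pathSum_mono hw fun a _ b hb => ?_) (pathSum_nonneg hw _ _ _)
    ((hw y g).trans hq)
  obtain ⟨hbg, hb⟩ := mem_erase.1 hb
  exact (contractRow_of_ne (ne_of_mem_of_not_mem hb hyU) hbg).ge

theorem pathSum_le_mul_pathSum_contractRow_erase (hw : 0 ≤ w) (hD : 1 ≤ D) (hxU : x ∉ U)
    (hy : y ∈ U) (hyt : y ≠ t) (hyg : y ≠ g) (hrow : ∀ b ∈ U, b ≠ y → b ≠ g → w y b = 0)
    (hq : w y g ≤ q) :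
    pathSum w t U x ≤ D * pathSum (fun a => contractRow q D y g (w a)) t (U.erase y) x := by
  have hq0 : 0 ≤ q := (hw y g).trans hq
  have hD0 : 0 < D := zero_lt_one.trans_le hD
  set w' : V → V → ℝ := fun a => contractRow q D y g (w a)
  have hw'0 : 0 ≤ w' := fun a => contractRow_nonneg hq0 hD0.le (hw a)
  induction U using Finset.strongInduction generalizing x with
  | H U ih =>
    obtain rfl | hxt := eq_or_ne x t
    · simpa using hD
    by_cases hgU : g ∈ U
    swap
    · exact (pathSum_le_pathSum_contractRow_erase_of_notMem hw hxU hy hyt hgU fun b hb hby =>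
        hrow b hb hby (ne_of_mem_of_not_mem hb hgU)).trans
          (le_mul_of_one_le_left (pathSum_nonneg hw'0 _ _ _) hD)
    have hgy : g ∈ U.erase y := mem_erase.2 ⟨hyg.symm, hgU⟩
    set P := pathSum w' t ((U.erase y).erase g) g
    have via_g : pathSum w t (U.erase g) g ≤ P := by
      simp only [P, erase_right_comm (a := y)]
      exact pathSum_le_pathSum_contractRow_erase_of_notMem hw (notMem_erase g U)
        (mem_erase.2 ⟨hyg, hy⟩) hyt (notMem_erase g U) fun b hb hby =>
          hrow b (mem_of_mem_erase hb) hby (ne_of_mem_erase hb)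
    have via_y : pathSum w t (U.erase y) y ≤ q * P :=
      pathSum_le_mul_pathSum_contractRow_of_row_support hw hyt (notMem_erase y U) hgy
        (fun b hb => hrow b (mem_of_mem_erase hb) (ne_of_mem_erase hb)) hq
    have via_other : ∀ v ∈ (U.erase y).erase g, w x v * pathSum w t (U.erase v) v ≤
        D * (w' x v * pathSum w' t ((U.erase y).erase v) v) := by
      intro v hv
      obtain ⟨hvg, hvy, hvU⟩ : v ≠ g ∧ v ≠ y ∧ v ∈ U := by simpa only [mem_erase] using hv
      have hxv : w' x v = w x v := contractRow_of_ne hvy hvg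
      rw [hxv, mul_left_comm, erase_right_comm]
      exact mul_le_mul_of_nonneg_left (ih _ (erase_ssubset hvU) (notMem_erase v U)
        (mem_erase.2 ⟨hvy.symm, hy⟩) fun b hb => hrow b (mem_of_mem_erase hb)) (hw x v)
    rw [pathSum_of_ne hxt, pathSum_of_ne hxt, ← add_sum_erase U _ hy, ← add_sum_erase _ _ hgy,
      ← add_sum_erase (U.erase y) _ hgy, mul_add, ← add_assoc, mul_sum]
    refine add_le_add ?_ (sum_le_sum via_other)
    calc w x y * pathSum w t (U.erase y) y + w x g * pathSum w t (U.erase g) g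
        ≤ w x y * (q * P) + w x g * P :=
          add_le_add (mul_le_mul_of_nonneg_left via_y (hw x y))
            (mul_le_mul_of_nonneg_left via_g (hw x g))
      _ = (w x g + q * w x y) * P := by ring
      _ = D * (w' x g * P) := by rw [← mul_contractRow_target hyg hD0.ne', mul_assoc]

end ContractRow

/-- A simple path uses at most one of the two edges from `x₁` and `x₂` into `v`. -/
theorem pathSum_le_add_of_common_target {w₁ w₂ : V → V → ℝ} {x₁ x₂ v : V} {r : ℝ}
    (hw : 0 ≤ w) (hw₁ : 0 ≤ w₁) (hw₂ : 0 ≤ w₂) (hr : 0 ≤ r) (hxU : x ∉ U)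
    (h₁ : ∀ a b, a ≠ x₁ ∨ b ≠ v → w a b ≤ w₁ a b)
    (h₂ : ∀ a b, a ≠ x₁ → a ≠ x₂ ∨ b ≠ v → w a b ≤ w₂ a b) (hr₂ : w x₁ v ≤ r * w₂ x₁ v) :
    pathSum w t U x ≤ pathSum w₁ t U x + r * pathSum w₂ t U x := by
  induction U using Finset.strongInduction generalizing x with
  | H U ih =>
    obtain rfl | hxt := eq_or_ne x t
    · simpa using hr
    rw [pathSum_of_ne hxt, pathSum_of_ne hxt, pathSum_of_ne hxt, mul_sum, ← sum_add_distrib]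
    refine sum_le_sum fun z hz => ?_
    have hp := pathSum_nonneg hw t (U.erase z) z
    have hp₁ := pathSum_nonneg hw₁ t (U.erase z) z
    have hp₂ := pathSum_nonneg hw₂ t (U.erase z) z
    have hs₁ : 0 ≤ w₁ x z * pathSum w₁ t (U.erase z) z := mul_nonneg (hw₁ x z) hp₁
    have hs₂ : 0 ≤ r * (w₂ x z * pathSum w₂ t (U.erase z) z) :=
      mul_nonneg hr (mul_nonneg (hw₂ x z) hp₂)
    by_cases hx₁ : x = x₁
    · have avoid_x₁ : ∀ a ∈ insert z (U.erase z), a ≠ x₁ := fun a ha =>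
        hx₁ ▸ ne_of_mem_of_not_mem (insert_erase hz ▸ ha) hxU
      obtain rfl | hzv := eq_or_ne z v
      · have h := pathSum_mono (t := t) hw fun a ha b hb =>
          h₂ a b (avoid_x₁ a ha) (.inr (ne_of_mem_erase hb))
        rw [← hx₁] at hr₂
        linarith [mul_le_mul hr₂ h hp (mul_nonneg hr (hw₂ x z))]
      · have h := pathSum_mono (t := t) hw fun a ha b _ => h₁ a b (.inl (avoid_x₁ a ha))
        linarith [mul_le_mul (h₁ x z (.inr hzv)) h hp (hw₁ x z)]
    · by_cases hx₂ : x = x₂ ∧ z = v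
      · have h := pathSum_mono (t := t) (U := U.erase z) (x := z) hw fun a _ b hb =>
          h₁ a b (.inr (hx₂.2 ▸ ne_of_mem_erase hb))
        linarith [mul_le_mul (h₁ x z (.inl hx₁)) h hp (hw₁ x z)]
      · have h := ih _ (erase_ssubset hz) (notMem_erase z U)
        have hle₁ := mul_le_mul_of_nonneg_right (h₁ x z (.inl hx₁)) hp₁
        have hle₂ := mul_le_mul_of_nonneg_right (h₂ x z hx₁ (not_and_or.1 hx₂)) hp₂
        linarith [mul_le_mul_of_nonneg_left h (hw x z), mul_le_mul_of_nonneg_left hle₂ hr]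

end PathSum

section AdmissibleRows

variable {V : Type*} [DecidableEq V] {c q : ℝ} {w : V → V → ℝ} {r r' : V → ℝ}
  {t x y z f g g' : V} {U : Finset V} {m : ℕ}

local notation "α" => metallicMean c

/-- The rows of weights to which the induction for the path bound applies: those dominated by an
edge of weight `c` and another one of weight `1`, and those dominated by a single edge of weight
`metallicMean c`, which arise from the former by contraction. -/
def IsAdmissibleRow (c : ℝ) (r : V → ℝ) : Prop :=
  0 ≤ r ∧ ((∃ f g, f ≠ g ∧ r ≤ Pi.single f c + Pi.single g 1) ∨
    ∃ f, r ≤ Pi.single f (metallicMean c))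

theorem IsAdmissibleRow.anti (hr : IsAdmissibleRow c r) (h₀ : 0 ≤ r') (h : r' ≤ r) :
    IsAdmissibleRow c r' :=
  ⟨h₀, hr.2.imp (fun ⟨f, g, hfg, hle⟩ => ⟨f, g, hfg, h.trans hle⟩)
    fun ⟨f, hle⟩ => ⟨f, h.trans hle⟩⟩

theorem IsAdmissibleRow.update_zero (hr : IsAdmissibleRow c r) (v : V) :
    IsAdmissibleRow c (Function.update r v 0) :=
  hr.anti (le_update_iff.2 ⟨le_rfl, fun b _ => hr.1 b⟩)
    (update_le_iff.2 ⟨hr.1 v, fun _ _ => le_rfl⟩)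

theorem isAdmissibleRow_single (hc : 0 ≤ c) (f : V) : IsAdmissibleRow c (Pi.single f α) :=
  ⟨Pi.single_nonneg.2 (metallicMean_pos hc).le, .inr ⟨f, le_rfl⟩⟩

theorem IsAdmissibleRow.le_metallicMean (hc : 1 ≤ c) (hr : IsAdmissibleRow c r) (v : V) :
    r v ≤ α := by
  have hα := one_le_metallicMean (zero_le_one.trans hc)
  obtain ⟨f, g, hfg, h⟩ | ⟨f, h⟩ := hr.2
  · refine (h v).trans ?_
    obtain rfl | hvf := eq_or_ne v f
    · simpa [hfg] using self_le_metallicMean c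
    · obtain rfl | hvg := eq_or_ne v g
      · simpa [hvf] using hα
      · simpa [hvf, hvg] using zero_le_one.trans hα
  · refine (h v).trans ?_
    rw [Pi.single_apply]
    split_ifs <;> linarith

theorem contractRow_single_add_single_le (hc : 1 ≤ c) (hq : 1 ≤ q) (hyg : y ≠ g) :
    contractRow q ((c * q + 1) / α) y g (Pi.single g c + Pi.single y 1) ≤ Pi.single g α := by
  have hα := metallicMean_pos (zero_le_one.trans hc)
  rw [add_comm (Pi.single g c : V → ℝ), contractRow_single_add_single _ _ hyg, Pi.single_le_single,
    div_le_iff₀ (by positivity), mul_div_cancel₀ _ hα.ne']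
  linarith [mul_nonneg (sub_nonneg.2 hc) (sub_nonneg.2 hq)]

theorem IsAdmissibleRow.contractRow (hc : 1 ≤ c) (hq : 1 ≤ q) (hqα : q ≤ α) (hyg : y ≠ g)
    (hr : IsAdmissibleRow c r) :
    IsAdmissibleRow c (contractRow q ((c * q + 1) / α) y g r) := by
  have hc0 : 0 ≤ c := zero_le_one.trans hc
  have hα := metallicMean_pos hc0
  set D := (c * q + 1) / α with hD
  have hqD : q ≤ D := (le_div_iff₀ hα).2 (mul_metallicMean_le_mul_add_one hqα)
  have hD1 : 1 ≤ D := hq.trans hqD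
  have hq0 : 0 ≤ q := zero_le_one.trans hq
  have hD0 : 0 ≤ D := zero_le_one.trans hD1
  refine ⟨contractRow_nonneg hq0 hD0 hr.1, ?_⟩
  obtain ⟨f, h, hfh, hle⟩ | ⟨f, hle⟩ := hr.2
  · have hle' := contractRow_mono (y := y) (g := g) hq0 hD0 hle
    by_cases hfy : f = y ∧ h = g
    · refine .inr ⟨g, hle'.trans_eq ?_⟩
      rw [hfy.1, hfy.2, contractRow_single_add_single _ _ hyg, add_comm 1, mul_comm q, hD,
        div_div_cancel₀ (by positivity)]
    by_cases hfg : f = g ∧ h = y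
    · refine .inr ⟨g, hle'.trans ?_⟩
      rw [hfg.1, hfg.2]
      exact contractRow_single_add_single_le hc hq hyg
    · refine .inl ⟨_, _, ?_, (hle'.trans_eq (contractRow_add _ _)).trans (add_le_add
        (contractRow_single_le hc0 hD1 hqD hyg f)
        (contractRow_single_le zero_le_one hD1 hqD hyg h))⟩
      grind
  · exact .inr ⟨_, (contractRow_mono hq0 hD0 hle).trans
      (contractRow_single_le hα.le hD1 hqD hyg f)⟩

/-- The path bound for `m` available vertices, which is the statement proved by induction on `m`. -/
def PathSumBound (c : ℝ) (t : V) (m : ℕ) : Prop :=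
  ∀ ⦃w : V → V → ℝ⦄, (∀ a, IsAdmissibleRow c (w a)) →
    ∀ ⦃U : Finset V⦄ ⦃x : V⦄, x ∉ U → #U = m → pathSum w t U x ≤ metallicMean c ^ m

theorem PathSumBound.mul_pathSum_le_of_row_support (hm : PathSumBound c t m) (hc : 1 ≤ c)
    (hw : ∀ a, IsAdmissibleRow c (w a)) (hxU : x ∉ U) (hU : #U = m + 1) (hy : y ∈ insert x U)
    (hyt : y ≠ t) (hrow : ∀ b ∈ U, b ≠ y → b ≠ g → w y b = 0) (hq : 1 ≤ q) (hqα : q ≤ α)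
    (hyg : w y g ≤ q) : α * pathSum w t U x ≤ (c * q + 1) * α ^ m := by
  have hc0 : 0 ≤ c := zero_le_one.trans hc
  have hα := metallicMean_pos hc0
  have hw0 : 0 ≤ w := fun a => (hw a).1
  have card_erase {v : V} (hv : v ∈ U) : #(U.erase v) = m := by rw [card_erase_of_mem hv, hU]; rfl
  have bound_erase {v : V} (hv : v ∈ U) : pathSum w t (U.erase v) v ≤ α ^ m :=
    hm hw (notMem_erase v U) (card_erase hv)
  obtain rfl | hyU := mem_insert.1 hy
  · have hrow' : ∀ b ∈ U, b ≠ g → w y b = 0 := fun b hb =>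
      hrow b hb (ne_of_mem_of_not_mem hb hxU)
    have := pathSum_le_mul_of_row_support hw0 hyt hrow' hyg (by positivity) fun v => bound_erase
    calc α * pathSum w t U y ≤ α * (q * α ^ m) := by gcongr
      _ = q * α * α ^ m := by ring
      _ ≤ (c * q + 1) * α ^ m := by gcongr; exact mul_metallicMean_le_mul_add_one hqα
  have hx : x ∉ U.erase y := fun h => hxU (mem_of_mem_erase h)
  obtain rfl | hyg' := eq_or_ne y g
  · have hrow' : ∀ b ∈ U, b ≠ y → w y b = 0 := fun b hb hby => hrow b hb hby hby
    have hα' : α ≤ c * q + 1 :=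
      (metallicMean_le_add_one hc0).trans (by gcongr; exact le_mul_of_one_le_right hc0 hq)
    calc α * pathSum w t U x ≤ α * pathSum w t (U.erase y) x := by
          gcongr; exact pathSum_le_pathSum_erase_of_row_eq_zero hw0 hxU hyU hyt hrow'
      _ ≤ (c * q + 1) * α ^ m :=
        mul_le_mul hα' (hm hw hx (card_erase hyU)) (pathSum_nonneg hw0 _ _ _) (by positivity)
  · set D := (c * q + 1) / α with hD
    have hD1 : 1 ≤ D := hq.trans ((le_div_iff₀ hα).2 (mul_metallicMean_le_mul_add_one hqα))
    have hcontr : pathSum (fun a => contractRow q D y g (w a)) t (U.erase y) x ≤ α ^ m :=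
      hm (fun a => (hw a).contractRow hc hq hqα hyg') hx (card_erase hyU)
    calc α * pathSum w t U x
        ≤ α * (D * pathSum (fun a => contractRow q D y g (w a)) t (U.erase y) x) := by
          gcongr
          exact pathSum_le_mul_pathSum_contractRow_erase hw0 hD1 hxU hyU hyt hyg' hrow hyg
      _ ≤ α * (D * α ^ m) := by gcongr
      _ = (c * q + 1) * α ^ m := by rw [← mul_assoc, hD, mul_div_cancel₀ _ hα.ne']

theorem PathSumBound.pathSum_le_of_row_support (hm : PathSumBound c t m) (hc : 1 ≤ c)
    (hw : ∀ a, IsAdmissibleRow c (w a)) (hxU : x ∉ U) (hU : #U = m + 1) (hy : y ∈ insert x U)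
    (hyt : y ≠ t) (hrow : ∀ b ∈ U, b ≠ y → b ≠ g → w y b = 0) :
    pathSum w t U x ≤ α ^ (m + 1) := by
  have hc0 := zero_le_one.trans hc
  refine le_of_mul_le_mul_left ?_ (metallicMean_pos hc0)
  calc α * pathSum w t U x ≤ (c * α + 1) * α ^ m :=
        hm.mul_pathSum_le_of_row_support hc hw hxU hU hy hyt hrow (one_le_metallicMean hc0) le_rfl
          ((hw y).le_metallicMean hc g)
    _ = α * α ^ (m + 1) := by rw [← metallicMean_sq]; ring

/-- The vertex `y` can be left inside `U` only through an edge to `f` of weight at most `c` and an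
edge to another vertex `g` of weight at most `1`: these are its heavy and its light target. -/
structure IsBranching (c : ℝ) (w : V → V → ℝ) (U : Finset V) (y f g : V) : Prop where
  ne : f ≠ g
  heavy_mem : f ∈ U.erase y
  light_mem : g ∈ U.erase y
  le : w y ≤ Pi.single f c + Pi.single g 1

theorem IsAdmissibleRow.exists_isBranching (hr : IsAdmissibleRow c (w y))
    (h : ¬∃ g, ∀ b ∈ U, b ≠ y → b ≠ g → w y b = 0) : ∃ f g, IsBranching c w U y f g := by
  have eq_zero {b : V} {s : ℝ} (hle : w y b ≤ s) (hs : s = 0) : w y b = 0 :=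
    (hs ▸ hle).antisymm (hr.1 b)
  obtain ⟨f, g, hfg, hle⟩ | ⟨f, hle⟩ := hr.2
  · refine ⟨f, g, hfg, ?_, ?_, hle⟩ <;> by_contra hmem
    · exact h ⟨g, fun b hb hby hbg => eq_zero (hle b) <| by
        simp [hbg, ne_of_mem_of_not_mem (mem_erase.2 ⟨hby, hb⟩) hmem]⟩
    · exact h ⟨f, fun b hb hby hbf => eq_zero (hle b) <| by
        simp [hbf, ne_of_mem_of_not_mem (mem_erase.2 ⟨hby, hb⟩) hmem]⟩
  · exact (h ⟨f, fun b _ _ hbf => eq_zero (hle b) (by simp [hbf])⟩).elim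

namespace IsBranching

theorem swap (h : IsBranching 1 w U y f g) : IsBranching 1 w U y g f :=
  ⟨h.ne.symm, h.light_mem, h.heavy_mem, h.le.trans_eq (add_comm _ _)⟩

theorem weight_heavy_le (h : IsBranching c w U y f g) : w y f ≤ c := by
  simpa [h.ne] using h.le f

theorem weight_light_le (h : IsBranching c w U y f g) : w y g ≤ 1 := by
  simpa [h.ne.symm] using h.le g

theorem weight_eq_zero (h : IsBranching c w U y f g) (hw : 0 ≤ w) {b : V} (hbf : b ≠ f)
    (hbg : b ≠ g) : w y b = 0 :=
  le_antisymm (by simpa [hbf, hbg] using h.le b) (hw y b)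

theorem pathSum_le (h : IsBranching c w U x f g) (hw : 0 ≤ w) (hxt : x ≠ t) :
    pathSum w t U x ≤ c * pathSum w t (U.erase f) f + pathSum w t (U.erase g) g := by
  rw [pathSum_of_ne hxt, sum_eq_add_of_mem f g (mem_of_mem_erase h.heavy_mem)
    (mem_of_mem_erase h.light_mem) h.ne fun b _ hb => by
      rw [h.weight_eq_zero hw hb.1 hb.2, zero_mul]]
  exact add_le_add (mul_le_mul_of_nonneg_right h.weight_heavy_le (pathSum_nonneg hw _ _ _))
    (mul_le_of_le_one_left (pathSum_nonneg hw _ _ _) h.weight_light_le)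

theorem mul_pathSum_heavy_le (h : IsBranching c w U y f g) (hm : PathSumBound c t m)
    (hc : 1 ≤ c) (hw : ∀ a, IsAdmissibleRow c (w a)) (hU : #U = m + 2) (hy : y ∈ U)
    (hyt : y ≠ t) : α * pathSum w t (U.erase f) f ≤ (c + 1) * α ^ m := by
  have hf := mem_of_mem_erase h.heavy_mem
  simpa only [mul_one] using hm.mul_pathSum_le_of_row_support hc hw (notMem_erase f U)
    (by rw [card_erase_of_mem hf, hU]; rfl) (by rwa [insert_erase hf]) hyt
    (fun b hb _ hbg => h.weight_eq_zero (fun a => (hw a).1) (ne_of_mem_erase hb) hbg) le_rfl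
    (one_le_metallicMean (zero_le_one.trans hc)) h.weight_light_le

theorem mul_pathSum_light_le (h : IsBranching c w U y f g) (hm : PathSumBound c t m)
    (hc : 1 ≤ c) (hw : ∀ a, IsAdmissibleRow c (w a)) (hU : #U = m + 2) (hy : y ∈ U)
    (hyt : y ≠ t) : α * pathSum w t (U.erase g) g ≤ (c ^ 2 + 1) * α ^ m := by
  have hg := mem_of_mem_erase h.light_mem
  simpa only [sq] using hm.mul_pathSum_le_of_row_support hc hw (notMem_erase g U)
    (by rw [card_erase_of_mem hg, hU]; rfl) (by rwa [insert_erase hg]) hyt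
    (fun b hb _ hbf => h.weight_eq_zero (fun a => (hw a).1) hbf (ne_of_mem_erase hb)) hc
    (self_le_metallicMean c) h.weight_heavy_le

theorem pathSum_le_of_heavy_unreachable (h : IsBranching c w U x f g) (hm : PathSumBound c t m)
    (hm' : PathSumBound c t (m + 1)) (hc : 0 ≤ c) (hw : ∀ a, IsAdmissibleRow c (w a))
    (hU : #U = m + 2) (hxt : x ≠ t) (hcol : ∀ a ∈ U, a ≠ f → a ≠ t → w a f = 0) :
    pathSum w t U x ≤ α ^ (m + 2) := by
  have hw0 : 0 ≤ w := fun a => (hw a).1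
  have hf := mem_of_mem_erase h.heavy_mem
  have hg := mem_of_mem_erase h.light_mem
  have hfg : f ∈ U.erase g := mem_erase.2 ⟨h.ne, hf⟩
  have heavy : pathSum w t (U.erase f) f ≤ α ^ (m + 1) :=
    hm' hw (notMem_erase f U) (by rw [card_erase_of_mem hf, hU]; rfl)
  have light : pathSum w t (U.erase g) g ≤ α ^ m :=
    (pathSum_le_pathSum_erase_of_col_eq_zero hw0 (notMem_erase g U) hfg
      (by rwa [insert_erase hg])).trans
    (hm hw (fun h => notMem_erase g U (mem_of_mem_erase h))
      (by rw [card_erase_of_mem hfg, card_erase_of_mem hg, hU]; rfl))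
  calc pathSum w t U x ≤ c * pathSum w t (U.erase f) f + pathSum w t (U.erase g) g :=
        h.pathSum_le hw0 hxt
    _ ≤ c * α ^ (m + 1) + α ^ m := by gcongr
    _ = α ^ m * (c * α + 1) := by ring
    _ = α ^ (m + 2) := by rw [← metallicMean_sq, pow_add]

theorem exists_of_weight_ne_zero (hw : 0 ≤ w)
    (hbr : ∀ a ∈ U, a ≠ t → ∃ f g, IsBranching c w U a f g) {v : V}
    (hcol : ¬∀ a ∈ U, a ≠ v → a ≠ t → w a v = 0) :
    ∃ y ∈ U, y ≠ t ∧ ((∃ g, IsBranching c w U y v g) ∨ ∃ f, IsBranching c w U y f v) := by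
  push Not at hcol
  obtain ⟨y, hyU, -, hyt, hyv⟩ := hcol
  obtain ⟨f, g, h⟩ := hbr y hyU hyt
  refine ⟨y, hyU, hyt, ?_⟩
  by_contra! hv
  refine hyv (h.weight_eq_zero hw ?_ ?_)
  · rintro rfl; exact hv.1 g h
  · rintro rfl; exact hv.2 f h

theorem mul_pathSum_target_le (hm : PathSumBound c t m) (hc : 1 ≤ c)
    (hw : ∀ a, IsAdmissibleRow c (w a)) (hU : #U = m + 2)
    (hbr : ∀ a ∈ U, a ≠ t → ∃ f g, IsBranching c w U a f g) {v : V}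
    (hcol : ¬∀ a ∈ U, a ≠ v → a ≠ t → w a v = 0) :
    α * pathSum w t (U.erase v) v ≤ (c ^ 2 + 1) * α ^ m := by
  have hα := metallicMean_pos (zero_le_one.trans hc)
  obtain ⟨y, hyU, hyt, ⟨g, h⟩ | ⟨f, h⟩⟩ := exists_of_weight_ne_zero (fun a => (hw a).1) hbr hcol
  · exact (h.mul_pathSum_heavy_le hm hc hw hU hyU hyt).trans (by gcongr; nlinarith)
  · exact h.mul_pathSum_light_le hm hc hw hU hyU hyt

theorem pathSum_le_of_light_le (h : IsBranching c w U x f g) (hm : PathSumBound c t m)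
    (hm' : PathSumBound c t (m + 1)) (hc : 1 ≤ c) (hw : ∀ a, IsAdmissibleRow c (w a))
    (hU : #U = m + 2) (hxt : x ≠ t) (hbr : ∀ a ∈ U, a ≠ t → ∃ f g, IsBranching c w U a f g)
    (light : α * pathSum w t (U.erase g) g ≤ (c + 1) * α ^ m) :
    pathSum w t U x ≤ α ^ (m + 2) := by
  have hc0 : 0 ≤ c := zero_le_one.trans hc
  have hα := metallicMean_pos hc0
  by_cases hcol : ∀ a ∈ U, a ≠ f → a ≠ t → w a f = 0
  · exact h.pathSum_le_of_heavy_unreachable hm hm' hc0 hw hU hxt hcol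
  have heavy := mul_pathSum_target_le hm hc hw hU hbr hcol
  refine le_of_mul_le_mul_left ?_ hα
  calc α * pathSum w t U x
      ≤ α * (c * pathSum w t (U.erase f) f + pathSum w t (U.erase g) g) := by
        gcongr; exact h.pathSum_le (fun a => (hw a).1) hxt
    _ = c * (α * pathSum w t (U.erase f) f) + α * pathSum w t (U.erase g) g := by ring
    _ ≤ c * ((c ^ 2 + 1) * α ^ m) + (c + 1) * α ^ m := by gcongr
    _ = (c * (c ^ 2 + 1) + (c + 1)) * α ^ m := by ring
    _ ≤ α ^ 3 * α ^ m := by gcongr; exact mul_sq_add_one_add_le_metallicMean_cube hc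
    _ = α * α ^ (m + 2) := by ring

theorem mul_pathSum_le_of_row_eq_update {w' : V → V → ℝ} (h : IsBranching c w U y f g)
    (hm : PathSumBound c t m) (hc : 1 ≤ c) (hw : 0 ≤ w) (hw' : ∀ a, IsAdmissibleRow c (w' a))
    (hxU : x ∉ U) (hU : #U = m + 1) (hy : y ∈ insert x U) (hyt : y ≠ t)
    (hrow : w' y = Function.update (w y) f 0) :
    α * pathSum w' t U x ≤ (c + 1) * α ^ m := by
  have hyg : w' y g ≤ 1 := by simpa [hrow, h.ne.symm] using h.weight_light_le
  have eq_zero : ∀ b ∈ U, b ≠ y → b ≠ g → w' y b = 0 := fun b _ _ hbg => by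
    obtain rfl | hbf := eq_or_ne b f
    · simp [hrow]
    · simpa [hrow, hbf] using h.weight_eq_zero hw hbf hbg
  simpa only [mul_one] using hm.mul_pathSum_le_of_row_support hc hw' hxU hU hy hyt eq_zero le_rfl
    (one_le_metallicMean (zero_le_one.trans hc)) hyg

/-- No simple path uses both heavy edges into `f`: on the paths using the first one the second can
be dropped, and on the others the first one. This leaves one of the two rows with a single edge of
weight at most `1`. -/
theorem pathSum_le_of_common_heavy (hy : IsBranching c w U y f g) (hz : IsBranching c w U z f g')
    (hm : PathSumBound c t (m + 1)) (hc : 2 ≤ c) (hw : ∀ a, IsAdmissibleRow c (w a))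
    (hxU : x ∉ U) (hU : #U = m + 2) (hyU : y ∈ insert x U) (hzU : z ∈ insert x U) (hyt : y ≠ t)
    (hzt : z ≠ t) (hyz : y ≠ z) : pathSum w t U x ≤ α ^ (m + 2) := by
  have hw0 : 0 ≤ w := fun a => (hw a).1
  have hc0 : 0 ≤ c := by linarith
  have hc1 : 1 ≤ c := by linarith
  have hα := metallicMean_pos hc0
  set w₁ := Function.update w y (Function.update (w y) f 0) with hw₁
  set w₂ := Function.update (Function.update w y (Pi.single f α)) z (Function.update (w z) f 0)
    with hw₂
  have adm₁ : ∀ a, IsAdmissibleRow c (w₁ a) :=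
    (Function.forall_update_iff _ _).2 ⟨(hw y).update_zero f, fun a _ => hw a⟩
  have adm₂ : ∀ a, IsAdmissibleRow c (w₂ a) :=
    (Function.forall_update_iff _ _).2 ⟨(hw z).update_zero f, fun a _ =>
      (Function.forall_update_iff _ (fun _ => IsAdmissibleRow c)).2
        ⟨isAdmissibleRow_single hc0 f, fun a _ => hw a⟩ a⟩
  have split : pathSum w t U x ≤ pathSum w₁ t U x + c / α * pathSum w₂ t U x := by
    refine pathSum_le_add_of_common_target (x₁ := y) (x₂ := z) (v := f) hw0
      (fun a => (adm₁ a).1) (fun a => (adm₂ a).1) (by positivity) hxU ?_ ?_ ?_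
    · intro a b hab
      by_cases hay : a = y <;> simp_all
    · intro a b hay hab
      by_cases haz : a = z <;> simp_all
    · simpa [hw₂, hyz, div_mul_cancel₀ _ hα.ne'] using hy.weight_heavy_le
  have bound₁ :=
    hy.mul_pathSum_le_of_row_eq_update hm hc1 hw0 adm₁ hxU hU hyU hyt (by simp [hw₁])
  have bound₂ :=
    hz.mul_pathSum_le_of_row_eq_update hm hc1 hw0 adm₂ hxU hU hzU hzt (by simp [hw₂])
  refine le_of_mul_le_mul_left ?_ (pow_pos hα 2)
  calc α ^ 2 * pathSum w t U x ≤ α ^ 2 * (pathSum w₁ t U x + c / α * pathSum w₂ t U x) := by gcongr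
    _ = α * (α * pathSum w₁ t U x) + c * (α * pathSum w₂ t U x) := by field_simp
    _ ≤ α * ((c + 1) * α ^ (m + 1)) + c * ((c + 1) * α ^ (m + 1)) := by gcongr
    _ = (c + 1) * (α + c) * α ^ (m + 1) := by ring
    _ ≤ α ^ 3 * α ^ (m + 1) := by gcongr; exact add_one_mul_metallicMean_add_le_cube hc
    _ = α ^ 2 * α ^ (m + 2) := by ring

end IsBranching

theorem PathSumBound.pathSum_le_of_isBranching (hm : PathSumBound c t m)
    (hm' : PathSumBound c t (m + 1)) (hc : c = 1 ∨ 2 ≤ c) (hw : ∀ a, IsAdmissibleRow c (w a))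
    (hxU : x ∉ U) (hU : #U = m + 2) (hxt : x ≠ t)
    (hbr : ∀ y ∈ insert x U, y ≠ t → ∃ f g, IsBranching c w U y f g) :
    pathSum w t U x ≤ α ^ (m + 2) := by
  have hbrU : ∀ y ∈ U, y ≠ t → ∃ f g, IsBranching c w U y f g := fun y hy =>
    hbr y (mem_insert_of_mem hy)
  obtain rfl | hc := hc
  · obtain ⟨f, g, h⟩ := hbr x (mem_insert_self x U) hxt
    by_cases hcol : ∀ a ∈ U, a ≠ g → a ≠ t → w a g = 0
    · exact h.swap.pathSum_le_of_heavy_unreachable hm hm' zero_le_one hw hU hxt hcol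
    · refine h.pathSum_le_of_light_le hm hm' le_rfl hw hU hxt hbrU ?_
      simpa only [one_pow] using IsBranching.mul_pathSum_target_le hm le_rfl hw hU hbrU hcol
  have hc1 : 1 ≤ c := by linarith
  choose! f g h using hbr
  have hx := h x (mem_insert_self x U) hxt
  by_cases hg : ∃ z ∈ insert x U, z ≠ t ∧ f z = g x
  · obtain ⟨z, hz, hzt, hzg⟩ := hg
    have hzU : z ∈ U := mem_of_mem_insert_of_ne hz <| by rintro rfl; exact hx.ne hzg
    exact hx.pathSum_le_of_light_le hm hm' hc1 hw hU hxt hbrU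
      ((hzg ▸ h z hz hzt).mul_pathSum_heavy_le hm hc1 hw hU hzU hzt)
  · push Not at hg
    have maps_to : Set.MapsTo f ((insert x U).erase t) (U.erase (g x)) := fun y hy => by
      obtain ⟨hyt, hyU⟩ := mem_erase.1 hy
      exact mem_erase.2 ⟨hg y hyU hyt, mem_of_mem_erase (h y hyU hyt).heavy_mem⟩
    have card_lt : #(U.erase (g x)) < #((insert x U).erase t) := by
      have := pred_card_le_card_erase (s := insert x U) (a := t)
      rw [card_insert_of_notMem hxU, Nat.add_sub_cancel] at this
      exact (card_erase_lt_of_mem (mem_of_mem_erase hx.light_mem)).trans_le this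
    obtain ⟨y, hy, z, hz, hyz, hfyz⟩ := exists_ne_map_eq_of_card_lt_of_maps_to card_lt maps_to
    obtain ⟨hyt, hyU⟩ := mem_erase.1 hy
    obtain ⟨hzt, hzU⟩ := mem_erase.1 hz
    exact (hfyz ▸ h y hyU hyt).pathSum_le_of_common_heavy (h z hzU hzt) hm' hc hw hxU hU hyU hzU
      hyt hzt hyz

theorem pathSumBound (hc : c = 1 ∨ 2 ≤ c) (t : V) (m : ℕ) : PathSumBound c t m := by
  have hc1 : 1 ≤ c := by obtain rfl | hc := hc <;> linarith
  have hα := one_le_metallicMean (zero_le_one.trans hc1)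
  induction m using Nat.twoStepInduction with
  | zero =>
    intro w _ U x _ hU
    rw [card_eq_zero.1 hU, pow_zero]
    exact pathSum_empty_le_one w t x
  | one =>
    intro w hw U x hxU hU
    obtain ⟨v, rfl⟩ := card_eq_one.1 hU
    obtain rfl | hxt := eq_or_ne x t
    · simpa using hα
    · rw [pathSum_of_ne hxt, sum_singleton, erase_singleton, pow_one]
      exact (mul_le_of_le_one_right ((hw x).1 v) (pathSum_empty_le_one w t v)).trans
        ((hw x).le_metallicMean hc1 v)
  | more m hm hm' =>
    intro w hw U x hxU hU
    obtain rfl | hxt := eq_or_ne x t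
    · simpa using one_le_pow₀ hα
    by_cases hrow : ∃ y ∈ insert x U, y ≠ t ∧ ∃ g, ∀ b ∈ U, b ≠ y → b ≠ g → w y b = 0
    · obtain ⟨y, hyU, hyt, g, hg⟩ := hrow
      exact hm'.pathSum_le_of_row_support hc1 hw hxU hU hyU hyt hg
    · exact hm.pathSum_le_of_isBranching hm' hc hw hxU hU hxt fun y hyU hyt =>
        (hw y).exists_isBranching fun hg => hrow ⟨y, hyU, hyt, hg⟩

end AdmissibleRows

section BoundedRows

variable {V : Type*} [Fintype V] {c : ℝ}

/-- The weights in `r` are shifted to the two largest coefficients in `B`. -/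
theorem exists_sum_mul_le_mul_add [Nontrivial V] {r B : V → ℝ} (hB : 0 ≤ B) (hr : 0 ≤ r)
    (hrc : ∀ v, r v ≤ c) (hsum : ∑ v, r v ≤ c + 1) :
    ∃ f g, f ≠ g ∧ ∑ v, r v * B v ≤ c * B f + B g := by
  obtain ⟨f, -, hf⟩ := exists_max_image univ B univ_nonempty
  obtain ⟨g, hg, hg'⟩ := exists_max_image (univ.erase f) B (univ_nontrivial.erase_nonempty)
  refine ⟨f, g, (ne_of_mem_erase hg).symm, ?_⟩
  rw [← add_sum_erase _ _ (mem_univ f)] at hsum ⊢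
  have rest_le : ∑ v ∈ univ.erase f, r v * B v ≤ (∑ v ∈ univ.erase f, r v) * B g := by
    rw [sum_mul]
    exact sum_le_sum fun v hv => mul_le_mul_of_nonneg_left (hg' v hv) (hr v)
  have := mul_nonneg (sub_nonneg.2 (hrc f)) (sub_nonneg.2 (hf g (mem_univ g)))
  linarith [mul_le_mul_of_nonneg_right hsum (hB g)]

variable [DecidableEq V] {w : V → V → ℝ} {t x y : V} {U : Finset V}

theorem exists_pathSum_update_eq (hw : 0 ≤ w) (t y : V) (hxU : x ∉ U) :
    ∃ (A : ℝ) (B : V → ℝ), 0 ≤ B ∧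
      ∀ r : V → ℝ, pathSum (Function.update w y r) t U x = A + ∑ v, r v * B v := by
  induction U using Finset.strongInduction generalizing x with
  | H U ih =>
    obtain rfl | hxt := eq_or_ne x t
    · exact ⟨1, 0, le_rfl, by simp⟩
    obtain rfl | hxy := eq_or_ne x y
    · refine ⟨0, fun v => if v ∈ U then pathSum w t (U.erase v) v else 0, fun v => ?_, fun r => ?_⟩
      · dsimp only
        split_ifs
        exacts [pathSum_nonneg hw _ _ _, le_rfl]
      · simp only [mul_ite, mul_zero, sum_ite_mem, univ_inter, zero_add, pathSum_of_ne hxt,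
          Function.update_self]
        refine sum_congr rfl fun v hv => ?_
        congr 1
        refine pathSum_congr fun a ha b _ => ?_
        rw [Function.update_of_ne (ne_of_mem_of_not_mem (insert_erase hv ▸ ha) hxU)]
    · have h (v : U) := ih _ (erase_ssubset v.2) (notMem_erase v.1 U)
      choose A B hB h using h
      refine ⟨∑ v : U, w x v * A v, ∑ v : U, w x v • B v,
        sum_nonneg fun v _ => smul_nonneg (hw x v) (hB v), fun r => ?_⟩
      simp only [Finset.sum_apply, Pi.smul_apply, smul_eq_mul, mul_sum]
      rw [pathSum_of_ne hxt, ← sum_coe_sort U, sum_comm, ← sum_add_distrib]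
      refine sum_congr rfl fun v _ => ?_
      rw [h v, Function.update_of_ne hxy, mul_add, mul_sum]
      simp only [mul_left_comm]

theorem exists_isAdmissibleRow_pathSum_le_update [Nontrivial V] (hc : 0 ≤ c) (hw : 0 ≤ w)
    (hwc : ∀ b, w y b ≤ c) (hsum : ∑ b, w y b ≤ c + 1) (hxU : x ∉ U) :
    ∃ r, IsAdmissibleRow c r ∧ pathSum w t U x ≤ pathSum (Function.update w y r) t U x := by
  obtain ⟨A, B, hB, h⟩ := exists_pathSum_update_eq hw t y hxU
  obtain ⟨f, g, hfg, hle⟩ := exists_sum_mul_le_mul_add hB (hw y) hwc hsum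
  refine ⟨Pi.single f c + Pi.single g 1, ⟨?_, .inl ⟨f, g, hfg, le_rfl⟩⟩, ?_⟩
  · exact add_nonneg (Pi.single_nonneg.2 hc) (Pi.single_nonneg.2 zero_le_one)
  · calc pathSum w t U x = A + ∑ v, w y v * B v := by rw [← h, Function.update_eq_self]
      _ ≤ A + (c * B f + B g) := by gcongr
      _ = pathSum (Function.update w y (Pi.single f c + Pi.single g 1)) t U x := by
        simp [h, add_mul, sum_add_distrib, Pi.single_apply]

theorem pathSum_le_metallicMean_pow_of_isAdmissibleRow_off [Nontrivial V] (hc : c = 1 ∨ 2 ≤ c)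
    (S : Finset V) (hw : 0 ≤ w) (hwc : ∀ a ∈ S, ∀ b, w a b ≤ c)
    (hsum : ∀ a ∈ S, ∑ b, w a b ≤ c + 1) (hrow : ∀ a ∉ S, IsAdmissibleRow c (w a))
    (hxU : x ∉ U) : pathSum w t U x ≤ metallicMean c ^ #U := by
  have hc0 : 0 ≤ c := by obtain rfl | hc := hc <;> linarith
  induction S using Finset.induction_on generalizing w with
  | empty => exact pathSumBound hc t #U (fun a => hrow a (notMem_empty a)) hxU rfl
  | insert y S hy ih =>
    obtain ⟨r, hr, hle⟩ := exists_isAdmissibleRow_pathSum_le_update (t := t) hc0 hw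
      (hwc y (mem_insert_self y S)) (hsum y (mem_insert_self y S)) hxU
    have update_eq {a : V} (ha : a ∈ S) : Function.update w y r a = w a :=
      Function.update_of_ne (ne_of_mem_of_not_mem ha hy) _ _
    refine hle.trans (ih (le_update_iff.2 ⟨hr.1, fun a _ => hw a⟩)
      (fun a ha => update_eq ha ▸ hwc a (mem_insert_of_mem ha))
      (fun a ha => update_eq ha ▸ hsum a (mem_insert_of_mem ha)) fun a ha => ?_)
    obtain rfl | hay := eq_or_ne a y
    · rwa [Function.update_self]
    · rw [Function.update_of_ne hay]
      exact hrow a (by simp [hay, ha])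

theorem pathSum_le_metallicMean_pow (hc : c = 1 ∨ 2 ≤ c) (hw : 0 ≤ w) (hwc : ∀ a b, w a b ≤ c)
    (hsum : ∀ a, ∑ b, w a b ≤ c + 1) (hxU : x ∉ U) :
    pathSum w t U x ≤ metallicMean c ^ #U := by
  obtain rfl | ⟨v, hv⟩ := U.eq_empty_or_nonempty
  · simpa using pathSum_empty_le_one w t x
  have : Nontrivial V := nontrivial_of_ne v x (ne_of_mem_of_not_mem hv hxU)
  exact pathSum_le_metallicMean_pow_of_isAdmissibleRow_off hc univ hw (fun a _ => hwc a)
    (fun a _ => hsum a) (fun a ha => (ha (mem_univ a)).elim) hxU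

end BoundedRows

section Trace

variable {V : Type*} {x : V} {S T : Finset V} {f : V → V}

theorem exists_forall_ne_exists_apply_eq [DecidablePred fun v => ∀ u ∈ S, f u ≠ v]
    (hS : S.Nonempty) (hsource : #{v ∈ S | ∀ u ∈ S, f u ≠ v} ≤ 1) :
    ∃ x ∈ S, ∀ v ∈ S, v ≠ x → ∃ u ∈ S, f u = v := by
  by_cases h : ∃ x ∈ S, ∀ u ∈ S, f u ≠ x
  · obtain ⟨x, hx, hxS⟩ := h
    refine ⟨x, hx, fun v hv hvx => ?_⟩
    by_contra! hvS
    exact hvx (card_le_one.1 hsource v (mem_filter.2 ⟨hv, hvS⟩) x (mem_filter.2 ⟨hx, hxS⟩))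
  · push Not at h
    obtain ⟨x, hx⟩ := hS
    exact ⟨x, hx, fun v hv _ => h v hv⟩

/-- Since `f` maps onto everything but `x`, it permutes the complement of a closed set containing
`x`, so such a set is closed under preimages too. -/
theorem eq_of_closed_of_connected (hmaps : ∀ v ∈ S, f v ∈ S)
    (hconn : ∀ v ∈ S,
      Relation.ReflTransGen (fun a b => (a ∈ S ∧ f a = b) ∨ (b ∈ S ∧ f b = a)) x v)
    (hsurj : ∀ v ∈ S, v ≠ x → ∃ u ∈ S, f u = v) (hT : T ⊆ S) (hxT : x ∈ T)
    (hclosed : ∀ v ∈ T, f v ∈ S → f v ∈ T) : T = S := by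
  have image_compl : S \ T = (S \ T).image f := by
    refine eq_of_subset_of_card_le (fun v hv => ?_) card_image_le
    obtain ⟨hvS, hvT⟩ := mem_sdiff.1 hv
    obtain ⟨u, hu, rfl⟩ := hsurj v hvS (ne_of_mem_of_not_mem hxT hvT).symm
    exact mem_image_of_mem f (mem_sdiff.2 ⟨hu, fun huT => hvT (hclosed u huT hvS)⟩)
  refine hT.antisymm fun v hv => ?_
  have reach := hconn v hv
  clear hv
  induction reach with
  | refl => exact hxT
  | @tail a b _ hab ih =>
    obtain ⟨haS, rfl⟩ | ⟨hbS, rfl⟩ := hab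
    · exact hclosed _ ih (hmaps _ haS)
    · by_contra hbT
      have := mem_image_of_mem f (mem_sdiff.2 ⟨hbS, hbT⟩)
      rw [← image_compl] at this
      exact (mem_sdiff.1 this).2 ih

variable [DecidableEq V]

/-- The set `S` can be listed without repetition by starting at `x` and repeatedly applying `f`,
and `f` is the identity off `S`. The value of `f` at the last vertex of the list is unrestricted. -/
inductive IsTraceFrom : V → Finset V → (V → V) → Prop
  | single (x : V) (f : V → V) (h : ∀ v, v ≠ x → f v = v) : IsTraceFrom x {x} f
  | cons (x : V) (S : Finset V) (f : V → V) (hx : x ∉ S)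
      (h : IsTraceFrom (f x) S (Function.update f x x)) : IsTraceFrom x (insert x S) f

theorem IsTraceFrom.mem (h : IsTraceFrom x S f) : x ∈ S := by
  cases h <;> simp

theorem isTraceFrom_of_forall_closed_eq (hx : x ∈ S) (hf : ∀ v ∉ S, f v = v)
    (h : ∀ T ⊆ S, x ∈ T → (∀ v ∈ T, f v ∈ S → f v ∈ T) → T = S) : IsTraceFrom x S f := by
  induction S using Finset.strongInduction generalizing x f with
  | H S ih =>
    by_cases hfx : f x ∈ S.erase x
    · rw [← insert_erase hx]
      refine .cons _ _ _ (notMem_erase x S) (ih _ (erase_ssubset hx) hfx ?_ ?_)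
      · intro v hv
        obtain rfl | hvx := eq_or_ne v x
        · exact Function.update_self v v f
        · rw [Function.update_of_ne hvx]
          exact hf v fun hvS => hv (mem_erase.2 ⟨hvx, hvS⟩)
      · intro T hT hfxT hT'
        have hxT : x ∉ T := fun hxT => notMem_erase x S (hT hxT)
        rw [← h (insert x T) (insert_subset hx (hT.trans (erase_subset x S)))
          (mem_insert_self x T) fun v hv hfv => ?_, erase_insert hxT]
        obtain rfl | hvT := mem_insert.1 hv
        · exact mem_insert_of_mem hfxT
        obtain hfvx | hfvx := eq_or_ne (f v) x
        · exact hfvx ▸ mem_insert_self x T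
        · have := hT' v hvT
          rw [Function.update_of_ne (ne_of_mem_of_not_mem hvT hxT)] at this
          exact mem_insert_of_mem (this (mem_erase.2 ⟨hfvx, hfv⟩))
    · have hS : {x} = S :=
        h {x} (singleton_subset_iff.2 hx) (mem_singleton_self x) fun v hv hfv => by
        rw [mem_singleton.1 hv] at hfv ⊢
        by_contra hne
        exact hfx (mem_erase.2 ⟨fun h => hne (mem_singleton.2 h), hfv⟩)
      subst hS
      exact .single x f fun v hv => hf v (notMem_singleton.2 hv)

theorem exists_isTraceFrom_of_connected [DecidablePred fun v => ∀ u ∈ S, f u ≠ v]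
    (hS : S.Nonempty) (hoff : ∀ v ∉ S, f v = v) (hmaps : ∀ v ∈ S, f v ∈ S)
    (hconn : ∀ u ∈ S, ∀ v ∈ S,
      Relation.ReflTransGen (fun a b => (a ∈ S ∧ f a = b) ∨ (b ∈ S ∧ f b = a)) u v)
    (hsource : #{v ∈ S | ∀ u ∈ S, f u ≠ v} ≤ 1) : ∃ x, IsTraceFrom x S f := by
  obtain ⟨x, hx, hsurj⟩ := exists_forall_ne_exists_apply_eq hS hsource
  exact ⟨x, isTraceFrom_of_forall_closed_eq hx hoff fun T hT hxT =>
    eq_of_closed_of_connected hmaps (hconn x hx) hsurj hT hxT⟩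

variable [Fintype V] {w : V → V → ℝ} {U : Finset V} {k : ℝ}

/-- The traces starting at `x` and staying in `U` afterwards. -/
noncomputable def tracesFrom (x : V) (U : Finset V) : Finset (Finset V × (V → V)) :=
  {p | p.1 ⊆ insert x U ∧ IsTraceFrom x p.1 p.2}

/-- The total weight of the traces starting at `x` and staying in `U` afterwards, where the weight
of a trace `(S, f)` is the product of the weights of the edges from `v ∈ S` to `f v`. -/
noncomputable def traceSum (w : V → V → ℝ) (U : Finset V) (x : V) : ℝ :=
  ∑ p ∈ tracesFrom x U, ∏ v ∈ p.1, w v (p.2 v)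

theorem tracesFrom_subset (x : V) (U : Finset V) :
    tracesFrom x U ⊆ (univ.image fun z => ({x}, Function.update id x z)) ∪
      (U.sigma fun y => tracesFrom y (U.erase y)).image fun q =>
        (insert x q.2.1, Function.update q.2.2 x q.1) := by
  rintro ⟨S, f⟩ hp
  obtain ⟨hS, h⟩ : S ⊆ insert x U ∧ IsTraceFrom x S f := by simpa [tracesFrom] using hp
  cases h with
  | single _ _ h =>
    refine mem_union_left _ (mem_image.2 ⟨f x, mem_univ _, Prod.ext rfl ?_⟩)
    exact Function.update_eq_iff.2 ⟨rfl, fun v hv => (h v hv).symm⟩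
  | cons _ S _ hx h =>
    have hSU : S ⊆ U := (subset_insert_iff_of_notMem hx).1 ((subset_insert x S).trans hS)
    have hfx : f x ∈ U := hSU h.mem
    refine mem_union_right _ (mem_image.2 ⟨⟨f x, S, Function.update f x x⟩, ?_, by simp⟩)
    simpa [tracesFrom, insert_erase hfx, hfx] using ⟨hSU, h⟩

theorem traceSum_le (hw : 0 ≤ w) (hxU : x ∉ U) :
    traceSum w U x ≤ ∑ b, w x b + ∑ y ∈ U, w x y * traceSum w (U.erase y) y := by
  have weight_nonneg (p : Finset V × (V → V)) : 0 ≤ ∏ v ∈ p.1, w v (p.2 v) :=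
    prod_nonneg fun v _ => hw v (p.2 v)
  have prod_cons {y : V} {p : Finset V × (V → V)} (hy : y ∈ U) (hp : p ∈ tracesFrom y (U.erase y)) :
      ∏ v ∈ insert x p.1, w v (Function.update p.2 x y v) = w x y * ∏ v ∈ p.1, w v (p.2 v) := by
    have hx : x ∉ p.1 := fun hx => hxU (insert_erase hy ▸ (mem_filter.1 hp).2.1 hx)
    rw [prod_insert hx, Function.update_self]
    congr 1
    refine prod_congr rfl fun v hv => ?_
    rw [Function.update_of_ne (ne_of_mem_of_not_mem hv hx)]
  calc traceSum w U x
    _ ≤ _ := sum_le_sum_of_subset_of_nonneg (tracesFrom_subset x U) fun p _ _ => weight_nonneg p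
    _ ≤ _ := (le_add_of_nonneg_right (sum_nonneg fun p _ => weight_nonneg p)).trans_eq
      (sum_union_inter ..)
    _ ≤ _ := add_le_add (sum_image_le_of_nonneg fun p _ => weight_nonneg p)
      (sum_image_le_of_nonneg fun p _ => weight_nonneg p)
    _ = ∑ b, w x b + ∑ y ∈ U, w x y * traceSum w (U.erase y) y := by
      simp only [prod_singleton, Function.update_self, sum_sigma, traceSum, mul_sum]
      congr 1
      exact sum_congr rfl fun y hy => sum_congr rfl fun p hp => prod_cons hy hp

theorem traceSum_le_mul_sum_pathSum (hw : 0 ≤ w) (hk : ∀ a, ∑ b, w a b ≤ k) (hxU : x ∉ U) :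
    traceSum w U x ≤ k * ∑ t ∈ insert x U, pathSum w t U x := by
  induction U using Finset.strongInduction generalizing x with
  | H U ih =>
    have paths_eq : ∑ t ∈ U, pathSum w t U x =
        ∑ y ∈ U, w x y * ∑ t ∈ U, pathSum w t (U.erase y) y := by
      rw [sum_congr rfl fun t ht => pathSum_of_ne (ne_of_mem_of_not_mem ht hxU).symm, sum_comm]
      simp only [mul_sum]
    calc traceSum w U x ≤ ∑ b, w x b + ∑ y ∈ U, w x y * traceSum w (U.erase y) y :=
          traceSum_le hw hxU
      _ ≤ k + ∑ y ∈ U, w x y * (k * ∑ t ∈ U, pathSum w t (U.erase y) y) := by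
        gcongr with y hy
        · exact hk x
        · exact hw x y
        · simpa only [insert_erase hy] using ih _ (erase_ssubset hy) (notMem_erase y U)
      _ = k * ∑ t ∈ insert x U, pathSum w t U x := by
        rw [sum_insert hxU, pathSum_self, paths_eq, mul_add, mul_one, mul_sum]
        simp only [mul_left_comm]

theorem pathCycleCount_le_sum_traceSum (G : V → V → ℕ) :
    (pathCycleCount G : ℝ) ≤ ∑ x, traceSum (fun u v => (G u v : ℝ)) (univ.erase x) x := by
  have weight_nonneg (p : Finset V × (V → V)) : 0 ≤ ∏ v ∈ p.1, (G v (p.2 v) : ℝ) :=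
    prod_nonneg fun v _ => Nat.cast_nonneg _
  calc (pathCycleCount G : ℝ)
    _ ≤ ∑ p : Finset V × (V → V) with ∃ x, IsTraceFrom x p.1 p.2,
          ∏ v ∈ p.1, (G v (p.2 v) : ℝ) := by
      rw [pathCycleCount, ← sum_product', sum_filter]
      push_cast
      refine sum_le_sum fun p _ => ?_
      split_ifs with h htrace htrace
      · exact le_rfl
      · exact (htrace (exists_isTraceFrom_of_connected h.1 h.2.1 h.2.2.1 h.2.2.2.1 h.2.2.2.2)).elim
      · exact weight_nonneg p
      · exact le_rfl
    _ ≤ ∑ p ∈ (univ.sigma fun x => tracesFrom x (univ.erase x)).image Sigma.snd,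
          ∏ v ∈ p.1, (G v (p.2 v) : ℝ) := by
      refine sum_le_sum_of_subset_of_nonneg (fun p hp => ?_) fun p _ _ => weight_nonneg p
      obtain ⟨x, hx⟩ := (mem_filter.1 hp).2
      exact mem_image.2 ⟨⟨x, p⟩, by simpa [tracesFrom, insert_erase] using hx, rfl⟩
    _ ≤ ∑ q ∈ univ.sigma fun x => tracesFrom x (univ.erase x),
          ∏ v ∈ q.2.1, (G v (q.2.2 v) : ℝ) := sum_image_le_of_nonneg fun p _ => weight_nonneg p
    _ = ∑ x, traceSum (fun u v => (G u v : ℝ)) (univ.erase x) x := sum_sigma ..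

end Trace

section PathCycleCount

variable {V : Type*} [Fintype V] [DecidableEq V] {k : ℕ} {G : V → V → ℕ}

theorem alphaK_eq_metallicMean (k : ℕ) : alphaK k = metallicMean (k - 1) := rfl

theorem pathCycleCount_le_of_lt_of_sum_le (hk : 2 ≤ k) (hlt : ∀ u v, G u v < k)
    (hsum : ∀ u, ∑ v, G u v ≤ k) :
    (pathCycleCount G : ℝ) ≤ Fintype.card V ^ 2 * k * alphaK k ^ (Fintype.card V - 1) := by
  have hc : (k : ℝ) - 1 = 1 ∨ 2 ≤ (k : ℝ) - 1 := by
    obtain rfl | hk := hk.eq_or_lt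
    · left; norm_num
    · right
      have : (3 : ℝ) ≤ k := by exact_mod_cast hk
      linarith
  have row_sum_le (u : V) : ∑ v, (G u v : ℝ) ≤ k := by exact_mod_cast hsum u
  have weight_le (u v : V) : (G u v : ℝ) ≤ k - 1 := by
    rw [le_sub_iff_add_le]
    exact_mod_cast hlt u v
  have pathSum_le (t x : V) : pathSum (fun u v => (G u v : ℝ)) t (univ.erase x) x ≤
      alphaK k ^ (Fintype.card V - 1) := by
    rw [← card_univ, ← card_erase_of_mem (mem_univ x), alphaK_eq_metallicMean]
    exact pathSum_le_metallicMean_pow hc (fun u v => Nat.cast_nonneg _) weight_le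
      (fun u => (row_sum_le u).trans_eq (sub_add_cancel _ _).symm) (notMem_erase x univ)
  calc (pathCycleCount G : ℝ)
    _ ≤ ∑ x, traceSum (fun u v => (G u v : ℝ)) (univ.erase x) x := pathCycleCount_le_sum_traceSum G
    _ ≤ ∑ x, k * ∑ t ∈ insert x (univ.erase x),
          pathSum (fun u v => (G u v : ℝ)) t (univ.erase x) x :=
      sum_le_sum fun x _ => traceSum_le_mul_sum_pathSum (fun u v => Nat.cast_nonneg _) row_sum_le
        (notMem_erase x univ)
    _ ≤ ∑ x : V, k * ∑ _t ∈ insert x (univ.erase x), alphaK k ^ (Fintype.card V - 1) := by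
      gcongr with x
      exact pathSum_le _ x
    _ = Fintype.card V ^ 2 * k * alphaK k ^ (Fintype.card V - 1) := by
      simp only [insert_erase (mem_univ _), sum_const, card_univ, nsmul_eq_mul]
      ring

end PathCycleCount

theorem stmt_9_general {V : Type*} [Fintype V] [DecidableEq V] {k : ℕ} (hk : 2 ≤ k)
    (G : V → V → ℕ) (hdeg : ∀ v, ∑ u, G v u ≤ k) :
    (pathCycleCount (fun u v => if G u v = k then 1 else G u v) : ℝ) ≤
      Fintype.card V ^ 2 * k * alphaK k ^ (Fintype.card V - 1) := by
  have hle (u v : V) : G u v ≤ k :=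
    (single_le_sum (fun _ _ => Nat.zero_le _) (mem_univ v)).trans (hdeg u)
  refine pathCycleCount_le_of_lt_of_sum_le hk (fun u v => ?_) fun u =>
    (sum_le_sum fun v _ => ?_).trans (hdeg u)
  · have := hle u v
    split_ifs <;> omega
  · split_ifs <;> omega

theorem stmt_9 (n k : ℕ) (hn : 1 ≤ n) (hk : 2 ≤ k) (G : Fin n → Fin n → ℕ)
    (hdeg : ∀ v : Fin n, (∑ u, G v u) = k) :
    (pathCycleCount (fun u v : Fin n => if G u v = k then 1 else G u v) : ℝ) ≤
      5 * (n : ℝ) ^ 2 * (k : ℝ) * alphaK k ^ (n - 1) := by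
  have hα : 0 ≤ alphaK k := by
    rw [alphaK_eq_metallicMean]
    exact (metallicMean_pos (sub_nonneg.2 (by exact_mod_cast one_le_two.trans hk))).le
  have := stmt_9_general hk G fun v => (hdeg v).le
  rw [Fintype.card_fin] at this
  nlinarith [show 0 ≤ (n : ℝ) ^ 2 * k * alphaK k ^ (n - 1) by positivity]
end

section
/- Let M be an n-state, k-action DMDP and let π_1 ≺ π_2 ≺ … ≺ π_ℓ be a sequence of policies in which each π_{i+1} is obtained from π_i by policy improvement with arbitrary action selection. Then ℓ ≤ k·n·N_1(G_M), where N_1(G_M) is the number of path-cycle subgraphs of the digraph obtained from the DMDP digraph G_M by replacing each multi-edge of multiplicity k by a single edge. -/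
open scoped Classical
open Finset

/-!
Every policy in the chain strictly improves on all earlier ones at some common state `v`, and the
value of a policy at `v` depends only on its actions along the path-cycle it traces from `v`.
So two policies of the chain whose chosen path-cycles have the same vertices and successors must
choose different actions somewhere on them. Choices at branching states are counted by the merged
edge multiplicities. At a non-branching state an improvement amounts to an increase of the
immediate reward. So for fixed choices at the branching states the ranks of the chosen rewards,
summed over the path-cycle, strictly increase along the chain; this sum lies in `[0, k n)`, hence
takes at most `k n` values.
-/

section Orbit

variable {V : Type*} [Fintype V] {g : V → V} {v x : V}

/-- The vertices `v, g v, g (g v), …` visited by iterating `g` from `v`. -/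
noncomputable def forwardOrbit (g : V → V) (v : V) : Finset V :=
  {x | ∃ t, g^[t] v = x}

lemma mem_forwardOrbit : x ∈ forwardOrbit g v ↔ ∃ t, g^[t] v = x := by
  simp [forwardOrbit]

lemma self_mem_forwardOrbit (g : V → V) (v : V) : v ∈ forwardOrbit g v :=
  mem_forwardOrbit.2 ⟨0, rfl⟩

lemma apply_mem_forwardOrbit (hx : x ∈ forwardOrbit g v) : g x ∈ forwardOrbit g v := by
  obtain ⟨t, rfl⟩ := mem_forwardOrbit.1 hx
  exact mem_forwardOrbit.2 ⟨t + 1, Function.iterate_succ_apply' g t v⟩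

@[elab_as_elim]
lemma forwardOrbit_induction {p : (x : V) → x ∈ forwardOrbit g v → Prop}
    (self : p v (self_mem_forwardOrbit g v))
    (apply : ∀ y hy, p y hy → p (g y) (apply_mem_forwardOrbit hy)) (hx : x ∈ forwardOrbit g v) :
    p x hx := by
  obtain ⟨t, rfl⟩ := mem_forwardOrbit.1 hx
  induction t with
  | zero => exact self
  | succ t ih =>
    simp only [Function.iterate_succ_apply']
    exact apply _ _ (ih (mem_forwardOrbit.2 ⟨t, rfl⟩))

lemma eq_of_mem_forwardOrbit_of_forall_apply_ne (hx : x ∈ forwardOrbit g v)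
    (hsource : ∀ u ∈ forwardOrbit g v, g u ≠ x) : x = v := by
  induction hx using forwardOrbit_induction with
  | self => rfl
  | apply y hy _ => exact absurd rfl (hsource y hy)

end Orbit

section PathCycle

variable {V : Type*} [Fintype V]

/-- The pair `p = (s, f)` consists of the vertex set and the successor map of a path-cycle, in the
encoding of `pathCycleCount`. -/
def IsPathCycle (p : Finset V × (V → V)) : Prop :=
  p.1.Nonempty ∧ (∀ v, v ∉ p.1 → p.2 v = v) ∧ (∀ v ∈ p.1, p.2 v ∈ p.1) ∧
    (∀ u ∈ p.1, ∀ v ∈ p.1, Relation.ReflTransGen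
      (fun a b => (a ∈ p.1 ∧ p.2 a = b) ∨ (b ∈ p.1 ∧ p.2 b = a)) u v) ∧
    #{v ∈ p.1 | ∀ u ∈ p.1, p.2 u ≠ v} ≤ 1

lemma pathCycleCount_eq_sum (G : V → V → ℕ) :
    pathCycleCount G = ∑ p : Finset V × (V → V) with IsPathCycle p, ∏ v ∈ p.1, G v (p.2 v) := by
  rw [sum_filter, Fintype.sum_prod_type, pathCycleCount]
  congr!

/-- The path-cycle traced by iterating `g` from `v`, encoded as in `pathCycleCount`: the successor
map is the identity off the orbit. -/
noncomputable def pathCycleFrom (g : V → V) (v : V) : Finset V × (V → V) :=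
  (forwardOrbit g v, (forwardOrbit g v).piecewise g id)

lemma pathCycleFrom_snd_apply {g : V → V} {v x : V} (hx : x ∈ (pathCycleFrom g v).1) :
    (pathCycleFrom g v).2 x = g x :=
  piecewise_eq_of_mem _ _ _ hx

lemma isPathCycle_pathCycleFrom (g : V → V) (v : V) : IsPathCycle (pathCycleFrom g v) := by
  set s := (pathCycleFrom g v).1
  set f := (pathCycleFrom g v).2
  have hfg : ∀ u ∈ s, f u = g u := fun u => pathCycleFrom_snd_apply
  let Adj : V → V → Prop := fun a b => (a ∈ s ∧ f a = b) ∨ (b ∈ s ∧ f b = a)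
  have hsymm : Std.Symm Adj := ⟨fun _ _ => Or.symm⟩
  have hconn : ∀ x ∈ s, Relation.ReflTransGen Adj v x := by
    intro x hx
    induction hx using forwardOrbit_induction with
    | self => exact .refl
    | apply y hy ih => exact ih.tail (.inl ⟨hy, hfg y hy⟩)
  have hsource : ∀ x ∈ s, (∀ u ∈ s, f u ≠ x) → x = v := fun x hx h =>
    eq_of_mem_forwardOrbit_of_forall_apply_ne hx fun u hu => hfg u hu ▸ h u hu
  refine ⟨⟨v, self_mem_forwardOrbit g v⟩, fun x hx => piecewise_eq_of_notMem _ _ _ hx,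
    fun x hx => Set.mem_of_eq_of_mem (hfg x hx) (apply_mem_forwardOrbit hx),
    fun x hx y hy => (symm (hconn x hx)).trans (hconn y hy), card_le_one.2 fun x hx y hy => ?_⟩
  rw [mem_filter] at hx hy
  exact (hsource x hx.1 hx.2).trans (hsource y hy.1 hy.2).symm

end PathCycle

namespace DMDP

variable {S A : Type*} (M : DMDP S A)

/-- The transition map of the Markov chain induced by the policy `π`. -/
def next (π : S → A) (x : S) : S := M.T x (π x)

lemma traj_succ (π : S → A) (x : S) (t : ℕ) :
    M.traj π x (t + 1) = M.next π (M.traj π x t) :=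
  Function.iterate_succ_apply' _ _ _

section Value

lemma summable_discounted_reward [Finite S] (π : S → A) (x : ℕ → S) :
    Summable fun t => M.gamma ^ t * M.R (x t) (π (x t)) := by
  obtain ⟨C, hC⟩ := (Set.finite_range fun y => |M.R y (π y)|).bddAbove
  refine Summable.of_norm_bounded
    ((summable_geometric_of_lt_one M.gamma_nonneg M.gamma_lt_one).mul_right C) fun t => ?_
  rw [norm_mul, norm_pow, Real.norm_of_nonneg M.gamma_nonneg, Real.norm_eq_abs]
  exact mul_le_mul_of_nonneg_left (hC ⟨x t, rfl⟩) (pow_nonneg M.gamma_nonneg t)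

lemma V_eq_Q [Finite S] (π : S → A) (x : S) : M.V π x = M.Q π x (π x) := by
  rw [V, (M.summable_discounted_reward π _).tsum_eq_zero_add, Q, V, ← tsum_mul_left]
  simp only [pow_succ', mul_assoc, pow_zero, one_mul]
  rfl

variable {M}

lemma V_congr {π π' : S → A} {s : Set S} (h : s.EqOn π π') (hs : s.MapsTo (M.next π) s)
    {v : S} (hv : v ∈ s) : M.V π v = M.V π' v := by
  have hmem (t : ℕ) : M.traj π v t ∈ s := hs.iterate t hv
  have htraj (t : ℕ) : M.traj π v t = M.traj π' v t := by
    induction t with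
    | zero => rfl
    | succ t ih => rw [traj_succ, traj_succ, ← ih, next, next, h (hmem t)]
  exact tsum_congr fun t => by rw [← htraj, h (hmem t)]

lemma exists_mem_forwardOrbit_ne_of_V_lt [Fintype S] {π π' : S → A} {v : S}
    (h : M.V π v < M.V π' v) : ∃ x ∈ forwardOrbit (M.next π') v, π x ≠ π' x := by
  by_contra! heq
  exact h.ne' (V_congr (fun x hx => (heq x hx).symm) (fun x hx => apply_mem_forwardOrbit hx)
    (self_mem_forwardOrbit _ v))

end Value

section Chain

variable {M} {ℓ : ℕ} {π : ℕ → S → A}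

lemma monotoneOn_V (hchain : ∀ i, i + 1 < ℓ → M.PLt (π i) (π (i + 1))) :
    MonotoneOn (fun i => M.V (π i)) (Set.Iio ℓ) :=
  monotoneOn_of_le_add_one Set.ordConnected_Iio fun i _ _ hi => (hchain i hi).1

lemma exists_forall_V_lt [Nonempty S] (hchain : ∀ i, i + 1 < ℓ → M.PLt (π i) (π (i + 1)))
    {i : ℕ} (hi : i < ℓ) : ∃ v, ∀ j < i, M.V (π j) v < M.V (π i) v := by
  cases i with
  | zero => simp
  | succ i =>
    obtain ⟨v, hv⟩ := (hchain i hi).2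
    refine ⟨v, fun j hj => lt_of_le_of_lt ?_ hv⟩
    have hi' : i < ℓ := i.lt_succ_self.trans hi
    exact monotoneOn_V hchain ((Nat.le_of_lt_succ hj).trans_lt hi') hi' (Nat.le_of_lt_succ hj) v

lemma ImpStep.eq_or_reward_lt [Finite S] {π π' : S → A} (h : M.ImpStep π π') {x : S}
    (hx : M.NonBranching x) : π x = π' x ∨ M.R x (π x) < M.R x (π' x) := by
  obtain ⟨y, hy⟩ := hx
  refine or_iff_not_imp_left.2 fun hne => ?_
  have hQ := h.2 x (Ne.symm hne)
  rw [V_eq_Q, Q, Q, hy, hy] at hQ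
  exact lt_of_add_lt_add_right hQ

lemma eq_or_reward_lt_of_le [Finite S] (hstep : ∀ i, i + 1 < ℓ → M.ImpStep (π i) (π (i + 1)))
    {x : S} (hx : M.NonBranching x) {i j : ℕ} (hij : i ≤ j) (hj : j < ℓ) :
    π i x = π j x ∨ M.R x (π i x) < M.R x (π j x) := by
  induction j, hij using Nat.le_induction with
  | base => exact .inl rfl
  | succ j _ ih =>
    rcases ih (j.lt_succ_self.trans hj), (hstep j hj).eq_or_reward_lt hx with ⟨h₁ | h₁, h₂ | h₂⟩
    · exact .inl (h₁.trans h₂)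
    · exact .inr (h₁ ▸ h₂)
    · exact .inr (h₂ ▸ h₁)
    · exact .inr (h₁.trans h₂)

end Chain

section Counting

variable [Fintype A]

/-- The rank of the reward of `a` among the rewards at `x`, which replaces the real-valued reward by
one of at most `|A|` natural numbers. -/
noncomputable def rewardRank (x : S) (a : A) : ℕ :=
  #{b | M.R x b < M.R x a}

lemma rewardRank_lt_card (x : S) (a : A) : M.rewardRank x a < Fintype.card A :=
  card_lt_univ_of_notMem (x := a) (by simp)

lemma rewardRank_lt_rewardRank {x : S} {a b : A} (h : M.R x a < M.R x b) :
    M.rewardRank x a < M.rewardRank x b := by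
  refine card_lt_card ((ssubset_iff_of_subset ?_).2 ⟨a, by simpa using h, by simp⟩)
  exact monotone_filter_right _ fun c _ hc => hc.trans h

lemma sum_rewardRank_lt_card_mul {s : Finset S} (hs : s.Nonempty) (π : S → A) :
    ∑ x ∈ s, M.rewardRank x (π x) < Fintype.card A * #s := by
  rw [mul_comm, ← smul_eq_mul, ← sum_const]
  exact sum_lt_sum_of_nonempty hs fun x _ => M.rewardRank_lt_card x _

lemma sum_rewardRank_lt_sum {s : Finset S} {π π' : S → A}
    (h : ∀ x ∈ s, π x = π' x ∨ M.R x (π x) < M.R x (π' x)) (hne : ∃ x ∈ s, π x ≠ π' x) :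
    ∑ x ∈ s, M.rewardRank x (π x) < ∑ x ∈ s, M.rewardRank x (π' x) := by
  obtain ⟨y, hy, hyne⟩ := hne
  refine sum_lt_sum (fun x hx => ?_)
    ⟨y, hy, M.rewardRank_lt_rewardRank ((h y hy).resolve_left hyne)⟩
  rcases h x hx with heq | hlt
  · rw [heq]
  · exact (M.rewardRank_lt_rewardRank hlt).le

lemma nonBranching_of_digraph_eq_card {x y : S} (h : M.digraph x y = Fintype.card A) :
    M.NonBranching x :=
  ⟨y, fun a => filter_eq_self.1 ((card_eq_iff_eq_univ _).1 h) a (mem_univ a)⟩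

/-- The multiplicity function of the digraph obtained from `G_M` by replacing each multi-edge of
multiplicity `k = |A|` by a single edge. -/
noncomputable def mergedDigraph (x y : S) : ℕ :=
  if M.digraph x y = Fintype.card A then 1 else M.digraph x y

lemma prod_mergedDigraph (s : Finset S) (f : S → S) :
    ∏ x ∈ s, M.mergedDigraph x (f x) =
      ∏ x ∈ s with M.digraph x (f x) ≠ Fintype.card A, M.digraph x (f x) := by
  simp only [mergedDigraph, prod_filter, ne_eq, ite_not]

lemma card_le_mul_prod_mergedDigraph {ι : Type*} [LinearOrder ι] {I : Finset ι} {π : ι → S → A}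
    {s : Finset S} (hs : s.Nonempty) {f : S → S} (hf : ∀ i ∈ I, ∀ x ∈ s, M.T x (π i x) = f x)
    (hreward : ∀ i ∈ I, ∀ j ∈ I, i < j → ∀ x ∈ s, M.NonBranching x →
      π i x = π j x ∨ M.R x (π i x) < M.R x (π j x))
    (hne : ∀ i ∈ I, ∀ j ∈ I, i < j → ∃ x ∈ s, π i x ≠ π j x) :
    #I ≤ Fintype.card A * #s * ∏ x ∈ s, M.mergedDigraph x (f x) := by
  let B : Finset S := {x ∈ s | M.digraph x (f x) ≠ Fintype.card A}
  let choices : Finset (B → A) := Fintype.piFinset fun x => {a | M.T x a = f x}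
  have hchoices : #choices = ∏ x ∈ s, M.mergedDigraph x (f x) := by
    rw [Fintype.card_piFinset, prod_mergedDigraph]
    exact prod_coe_sort B fun x => M.digraph x (f x)
  let code : ι → ℕ × (B → A) := fun i => (∑ x ∈ s, M.rewardRank x (π i x), fun x => π i x)
  have hmaps : Set.MapsTo code I (range (Fintype.card A * #s) ×ˢ choices : Finset _) := by
    intro i hi
    refine mem_coe.2 (mem_product.2 ⟨mem_range.2 (M.sum_rewardRank_lt_card_mul hs _),
      Fintype.mem_piFinset.2 fun x => ?_⟩)
    simpa using hf i hi x (mem_filter.1 x.2).1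
  have hinj : Set.InjOn code I := by
    intro i hi j hj hij
    by_contra hne_ij
    wlog hlt : i < j generalizing i j
    · exact this hj hi hij.symm (Ne.symm hne_ij) (lt_of_le_of_ne (not_lt.1 hlt) (Ne.symm hne_ij))
    obtain ⟨hrank, hB⟩ := Prod.mk.inj hij
    refine (M.sum_rewardRank_lt_sum (fun x hx => ?_) (hne i hi j hj hlt)).ne hrank
    by_cases hx' : M.digraph x (f x) = Fintype.card A
    · exact hreward i hi j hj hlt x hx (M.nonBranching_of_digraph_eq_card hx')
    · exact .inl (congrFun hB ⟨x, mem_filter.2 ⟨hx, hx'⟩⟩)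
  calc #I ≤ #(range (Fintype.card A * #s) ×ˢ choices) := card_le_card_of_injOn code hmaps hinj
    _ = _ := by rw [card_product, card_range, hchoices]

lemma card_pathCycleFrom_eq_le [Fintype S] {ℓ : ℕ} {π : ℕ → S → A}
    (hstep : ∀ i, i + 1 < ℓ → M.ImpStep (π i) (π (i + 1))) {v : Fin ℓ → S}
    (hv : ∀ i : Fin ℓ, ∀ j < (i : ℕ), M.V (π j) (v i) < M.V (π i) (v i))
    {p : Finset S × (S → S)} (hp : IsPathCycle p) :
    #{i : Fin ℓ | pathCycleFrom (M.next (π i)) (v i) = p} ≤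
      Fintype.card A * Fintype.card S * ∏ x ∈ p.1, M.mergedDigraph x (p.2 x) := by
  set I : Finset (Fin ℓ) := {i | pathCycleFrom (M.next (π i)) (v i) = p}
  have hf : ∀ i ∈ I, ∀ x ∈ p.1, M.T x (π i x) = p.2 x := by
    intro i hi x hx
    obtain rfl := (mem_filter.1 hi).2
    exact (pathCycleFrom_snd_apply hx).symm
  have hne : ∀ i ∈ I, ∀ j ∈ I, i < j → ∃ x ∈ p.1, π i x ≠ π j x := by
    intro i _ j hj hij
    obtain rfl := (mem_filter.1 hj).2
    exact exists_mem_forwardOrbit_ne_of_V_lt (hv j i hij)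
  calc #I ≤ Fintype.card A * #p.1 * ∏ x ∈ p.1, M.mergedDigraph x (p.2 x) :=
        M.card_le_mul_prod_mergedDigraph hp.1 hf
          (fun _ _ j _ hij _ _ hx => eq_or_reward_lt_of_le hstep hx hij.le j.2) hne
    _ ≤ Fintype.card A * Fintype.card S * ∏ x ∈ p.1, M.mergedDigraph x (p.2 x) := by
        gcongr
        exact card_le_univ p.1

end Counting

end DMDP

theorem stmt_13 {S A : Type*} [Fintype S] [Nonempty S] [Fintype A] [Nonempty A]
    (M : DMDP S A) (n k : ℕ) (hn : Fintype.card S = n) (hk : Fintype.card A = k)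
    (ℓ : ℕ) (π : ℕ → S → A)
    (hchain : ∀ i, i + 1 < ℓ → M.PLt (π i) (π (i + 1)))
    (hstep : ∀ i, i + 1 < ℓ → M.ImpStep (π i) (π (i + 1))) :
    ℓ ≤ k * n *
      pathCycleCount (fun s s' : S =>
        if M.digraph s s' = k then 1 else M.digraph s s') := by
  subst hn hk
  choose v hv using fun i : Fin ℓ => DMDP.exists_forall_V_lt hchain i.2
  let P : Fin ℓ → Finset S × (S → S) := fun i => pathCycleFrom (M.next (π i)) (v i)
  have hP : ∀ i, IsPathCycle (P i) := fun i => isPathCycle_pathCycleFrom _ _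
  calc ℓ = #(univ : Finset (Fin ℓ)) := (card_fin ℓ).symm
    _ = ∑ p with IsPathCycle p, #{i | P i = p} :=
      card_eq_sum_card_fiberwise fun i _ => by simpa using hP i
    _ ≤ ∑ p with IsPathCycle p,
        Fintype.card A * Fintype.card S * ∏ x ∈ p.1, M.mergedDigraph x (p.2 x) :=
      sum_le_sum fun p hp => M.card_pathCycleFrom_eq_le hstep hv (mem_filter.1 hp).2
    _ = Fintype.card A * Fintype.card S * pathCycleCount M.mergedDigraph := by
      rw [pathCycleCount_eq_sum, mul_sum]
end
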